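/- arXiv:2505.22901 — 9 statements merged into one kernel-verified Lean document; each statement's English description precedes it below -/
import Mathlib

section
/- Fix integers n₊ ≥ 1 and n₋ ≥ 1 and set n = n₊ + n₋. Let μ > 0 with sin μ ≠ 0, set λ = μ², and let c ∈ ℂ. Then there is exactly one n-tuple f = (f₁, …, f_n) of twice continuously differentiable functions f_j : [0,1] → ℂ with f_j'' = −λ·f_j for 1 ≤ j ≤ n₊, f_j'' = λ·f_j for n₊+1 ≤ j ≤ n, f_j(1) = 0 for all j and f_j(0) = c for all j; and it satisfies ∑_{j=1}^n f_j'(0) = −μ·( n₊·cot μ + n₋·coth μ )·c. (In other words, the Weyl function of the boundary triple is M(λ) = −μ(n₊ cot μ + n₋ coth μ) for λ = μ² > 0.) -/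
/-- `KirchhoffData np nm lam c f` says that the tuple `f = (f₁, …, f_n)`, `n = np + nm`,
consists of twice continuously differentiable functions satisfying `fⱼ'' = −λ·fⱼ` on the
first `np` edges, `fⱼ'' = λ·fⱼ` on the last `nm` edges, the Dirichlet conditions
`fⱼ(1) = 0` at the outer vertices, and having the common value `c` at the central vertex. -/
def KirchhoffData (np nm : ℕ) (lam : ℝ) (c : ℂ) (f : Fin (np + nm) → ℝ → ℂ) : Prop :=
  (∀ j, ContDiff ℝ 2 (f j)) ∧
  (∀ j : Fin (np + nm), (j : ℕ) < np →
    ∀ x : ℝ, deriv (deriv (f j)) x = -(lam : ℂ) * f j x) ∧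
  (∀ j : Fin (np + nm), np ≤ (j : ℕ) →
    ∀ x : ℝ, deriv (deriv (f j)) x = (lam : ℂ) * f j x) ∧
  (∀ j, f j 1 = 0) ∧
  (∀ j, f j 0 = c)

/-!
On an edge the equation has the form `f'' = a² f`, with `a = iμ` on the first `np` edges and
`a = μ` on the remaining ones. Factoring `d²/dx² - a² = (d/dx + a) (d/dx - a)` shows that
`f' - a f` and `f' + a f` are exponentials, so `a f` is a combination of `cosh (a (x - 1))` and
`sinh (a (x - 1))`. The condition `f 1 = 0` leaves only the `sinh` term, and `f 0 = c` fixes its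
coefficient as long as `sinh a ≠ 0`. Hence `f x = c sinh (a (1 - x)) / sinh a`, and
`f' 0 = -a coth a · c`. Summing over the edges and using `iμ coth (iμ) = μ cot μ` gives the
Weyl function.
-/

open Complex

theorem eq_mul_exp_of_hasDerivAt {y : ℝ → ℂ} {b : ℂ} (hy : ∀ x, HasDerivAt y (b * y x) x)
    (x₀ x : ℝ) : y x = y x₀ * exp (b * (x - x₀)) := by
  have hderiv : ∀ t : ℝ, HasDerivAt (fun t : ℝ ↦ y t * exp (-b * (t - x₀))) 0 t := fun t ↦ by
    have hexp : HasDerivAt (fun t : ℝ ↦ exp (-b * (t - x₀))) (exp (-b * (t - x₀)) * -b) t := by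
      simpa using (((hasDerivAt_id (t : ℂ)).sub_const (x₀ : ℂ)).const_mul (-b)).cexp.comp_ofReal
    exact ((hy t).mul hexp).congr_deriv (by ring)
  have hconst : y x * exp (-b * (x - x₀)) = y x₀ := by
    simpa using is_const_of_deriv_eq_zero (fun t ↦ (hderiv t).differentiableAt)
      (fun t ↦ (hderiv t).deriv) x x₀
  rw [← hconst, mul_assoc, ← exp_add, neg_mul, neg_add_cancel, exp_zero, mul_one]

section SecondOrder

variable {f : ℝ → ℂ} {a : ℂ}

theorem deriv_sub_mul_eq_mul_exp (hf : ContDiff ℝ 2 f)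
    (hode : ∀ x, deriv (deriv f) x = a ^ 2 * f x) (x₀ x : ℝ) :
    deriv f x - a * f x = (deriv f x₀ - a * f x₀) * exp (-a * (x - x₀)) := by
  refine eq_mul_exp_of_hasDerivAt (y := fun x ↦ deriv f x - a * f x) (fun t ↦ ?_) x₀ x
  have hf' : HasDerivAt f (deriv f t) t := (hf.differentiable two_ne_zero t).hasDerivAt
  have hf'' : HasDerivAt (deriv f) (a ^ 2 * f t) t :=
    hode t ▸ (hf.differentiable_deriv_two t).hasDerivAt
  exact (hf''.sub (hf'.const_mul a)).congr_deriv (by ring)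

theorem mul_eq_cosh_add_sinh (hf : ContDiff ℝ 2 f)
    (hode : ∀ x, deriv (deriv f) x = a ^ 2 * f x) (x₀ x : ℝ) :
    a * f x = a * f x₀ * cosh (a * (x - x₀)) + deriv f x₀ * sinh (a * (x - x₀)) := by
  have hminus := deriv_sub_mul_eq_mul_exp hf hode x₀ x
  have hplus := deriv_sub_mul_eq_mul_exp (a := -a) hf (by simpa using hode) x₀ x
  rw [neg_mul a (x - x₀ : ℂ)] at hminus
  rw [neg_neg] at hplus
  rw [cosh, sinh]
  linear_combination (hplus - hminus) / 2

end SecondOrder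

/-- `f` is a `C²` solution of `f'' = k f` with the Dirichlet condition `f 1 = 0` at the outer
vertex and the value `c` at the central vertex `0`: the condition that `KirchhoffData` imposes on
a single edge. -/
structure IsEdgeSolution (k c : ℂ) (f : ℝ → ℂ) : Prop where
  contDiff : ContDiff ℝ 2 f
  deriv_deriv : ∀ x, deriv (deriv f) x = k * f x
  apply_one : f 1 = 0
  apply_zero : f 0 = c

/-- The explicit solution of `f'' = a² f`, `f 1 = 0`, `f 0 = c`. If `sinh a = 0` it is the zero
function, by division by zero. -/
noncomputable def edgeSolution (a c : ℂ) (x : ℝ) : ℂ :=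
  c * sinh (a * (1 - x)) / sinh a

section EdgeSolution

variable {a c : ℂ} {f : ℝ → ℂ}

theorem hasDerivAt_mul_one_sub (a z : ℂ) : HasDerivAt (fun z ↦ a * (1 - z)) (-a) z := by
  simpa using ((hasDerivAt_id z).const_sub 1).const_mul a

theorem deriv_edgeSolution (a c : ℂ) :
    deriv (edgeSolution a c) = fun x : ℝ ↦ -a * c * cosh (a * (1 - x)) / sinh a := by
  funext x
  have h := ((hasDerivAt_mul_one_sub a x).csinh.const_mul c).div_const (sinh a)
  exact (h.comp_ofReal.congr_deriv (by ring)).deriv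

theorem deriv_deriv_edgeSolution (a c : ℂ) (x : ℝ) :
    deriv (deriv (edgeSolution a c)) x = a ^ 2 * edgeSolution a c x := by
  have h := ((hasDerivAt_mul_one_sub a x).ccosh.const_mul (-a * c)).div_const (sinh a)
  rw [deriv_edgeSolution]
  exact (h.comp_ofReal.congr_deriv (by rw [edgeSolution]; ring)).deriv

theorem deriv_edgeSolution_zero (a c : ℂ) :
    deriv (edgeSolution a c) 0 = -(a * (cosh a / sinh a)) * c := by
  simp only [deriv_edgeSolution, ofReal_zero, sub_zero, mul_one]
  ring

theorem contDiff_edgeSolution (a c : ℂ) {n : WithTop ℕ∞} : ContDiff ℝ n (edgeSolution a c) := by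
  have h : ContDiff ℂ n fun z : ℂ ↦ c * sinh (a * (1 - z)) / sinh a := by fun_prop
  exact (h.restrict_scalars ℝ).comp ofRealCLM.contDiff

theorem isEdgeSolution_edgeSolution (ha : sinh a ≠ 0) :
    IsEdgeSolution (a ^ 2) c (edgeSolution a c) where
  contDiff := contDiff_edgeSolution a c
  deriv_deriv := deriv_deriv_edgeSolution a c
  apply_one := by simp [edgeSolution]
  apply_zero := by simp [edgeSolution, ha]

theorem IsEdgeSolution.eq_edgeSolution (ha : sinh a ≠ 0) (hf : IsEdgeSolution (a ^ 2) c f) :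
    f = edgeSolution a c := by
  have ha₀ : a ≠ 0 := by
    rintro rfl
    exact ha sinh_zero
  have hsinh (x : ℝ) : a * f x = -deriv f 1 * sinh (a * (1 - x)) := by
    rw [mul_eq_cosh_add_sinh hf.contDiff hf.deriv_deriv 1 x, hf.apply_one, ofReal_one,
      ← neg_sub 1 (x : ℂ), mul_neg, sinh_neg]
    ring
  have hcoeff : a * c = -deriv f 1 * sinh a := by
    simpa [hf.apply_zero] using hsinh 0
  funext x
  rw [edgeSolution, eq_div_iff ha]
  apply mul_left_cancel₀ ha₀
  linear_combination sinh a * hsinh x - sinh (a * (1 - x)) * hcoeff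

theorem isEdgeSolution_iff_eq_edgeSolution (ha : sinh a ≠ 0) :
    IsEdgeSolution (a ^ 2) c f ↔ f = edgeSolution a c :=
  ⟨IsEdgeSolution.eq_edgeSolution ha, fun h ↦ h ▸ isEdgeSolution_edgeSolution ha⟩

end EdgeSolution

/-- The square root `a` of the coefficient in `f'' = a² f` on each edge of the star graph at
`λ = μ²`: it is `iμ` on the first `np` edges and `μ` on the last `nm` edges. -/
def edgeRate (np nm : ℕ) (μ : ℂ) : Fin (np + nm) → ℂ :=
  Fin.addCases (fun _ ↦ μ * I) (fun _ ↦ μ)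

section StarGraph

variable {np nm : ℕ} {μ : ℂ}

theorem sinh_edgeRate_ne_zero (hsin : sin μ ≠ 0) (hsinh : sinh μ ≠ 0) (j : Fin (np + nm)) :
    sinh (edgeRate np nm μ j) ≠ 0 := by
  cases j using Fin.addCases with
  | left i => simpa [edgeRate, sinh_mul_I] using hsin
  | right i => simpa [edgeRate] using hsinh

theorem kirchhoffData_iff_forall_isEdgeSolution {lam : ℝ} {c : ℂ} {f : Fin (np + nm) → ℝ → ℂ}
    (hlam : (lam : ℂ) = μ ^ 2) :
    KirchhoffData np nm lam c f ↔ ∀ j, IsEdgeSolution (edgeRate np nm μ j ^ 2) c (f j) := by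
  have hrate_left (i : Fin np) : edgeRate np nm μ (Fin.castAdd nm i) ^ 2 = -(lam : ℂ) := by
    simp [edgeRate, mul_pow, hlam]
  have hrate_right (i : Fin nm) : edgeRate np nm μ (Fin.natAdd np i) ^ 2 = lam := by
    simp [edgeRate, hlam]
  constructor
  · rintro ⟨hdiff, hleft, hright, hone, hzero⟩ j
    refine ⟨hdiff j, ?_, hone j, hzero j⟩
    cases j using Fin.addCases with
    | left i => simpa only [hrate_left] using hleft _ (by simp)
    | right i => simpa only [hrate_right] using hright _ (by simp)
  · intro h
    refine ⟨fun j ↦ (h j).contDiff, fun j hj ↦ ?_, fun j hj ↦ ?_, fun j ↦ (h j).apply_one,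
      fun j ↦ (h j).apply_zero⟩
    · obtain ⟨i, rfl⟩ : ∃ i, Fin.castAdd nm i = j := ⟨j.castLT hj, Fin.castAdd_castLT nm j hj⟩
      simpa only [← hrate_left i] using (h _).deriv_deriv
    · obtain ⟨i, rfl⟩ : ∃ i, Fin.natAdd np i = j := ⟨_, Fin.natAdd_subNat_cast hj⟩
      simpa only [← hrate_right i] using (h _).deriv_deriv

theorem kirchhoffData_iff_eq_edgeSolution {lam : ℝ} {c : ℂ} {f : Fin (np + nm) → ℝ → ℂ}
    (hlam : (lam : ℂ) = μ ^ 2) (hsin : sin μ ≠ 0) (hsinh : sinh μ ≠ 0) :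
    KirchhoffData np nm lam c f ↔ f = fun j ↦ edgeSolution (edgeRate np nm μ j) c := by
  simp only [kirchhoffData_iff_forall_isEdgeSolution hlam, funext_iff (f := f),
    isEdgeSolution_iff_eq_edgeSolution (sinh_edgeRate_ne_zero hsin hsinh _)]

theorem sum_edgeRate_mul_coth (np nm : ℕ) (μ : ℂ) :
    ∑ j, edgeRate np nm μ j * (cosh (edgeRate np nm μ j) / sinh (edgeRate np nm μ j)) =
      μ * (np * (cos μ / sin μ) + nm * (cosh μ / sinh μ)) := by
  have hcot : μ * I * (cosh (μ * I) / sinh (μ * I)) = μ * (cos μ / sin μ) := by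
    rw [cosh_mul_I, sinh_mul_I, mul_assoc, mul_div_assoc', mul_comm I,
      mul_div_mul_right _ _ I_ne_zero]
  simp only [edgeRate, Fin.sum_univ_add, Fin.addCases_left, Fin.addCases_right, hcot,
    Finset.sum_const, Finset.card_univ, Fintype.card_fin, nsmul_eq_mul]
  ring

end StarGraph

/-- For imaginary `μ` this covers `λ < 0`. -/
theorem stmt_4_general (np nm : ℕ) (lam : ℝ) (μ : ℂ) (hlam : (lam : ℂ) = μ ^ 2)
    (hsin : sin μ ≠ 0) (hsinh : sinh μ ≠ 0) (c : ℂ) :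
    (∃! f : Fin (np + nm) → ℝ → ℂ, KirchhoffData np nm lam c f) ∧
    (∀ f : Fin (np + nm) → ℝ → ℂ, KirchhoffData np nm lam c f →
      ∑ j : Fin (np + nm), deriv (f j) 0
        = -μ * (np * (cos μ / sin μ) + nm * (cosh μ / sinh μ)) * c) := by
  simp only [kirchhoffData_iff_eq_edgeSolution hlam hsin hsinh, existsUnique_eq, true_and,
    forall_eq, deriv_edgeSolution_zero]
  rw [← Finset.sum_mul, Finset.sum_neg_distrib, sum_edgeRate_mul_coth, neg_mul μ]

/-- The Weyl function of the boundary triple at `λ = μ² > 0` is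
`M(λ) = −μ(n₊ cot μ + n₋ coth μ)`: for `μ > 0` with `sin μ ≠ 0` and `c ∈ ℂ` there is exactly
one tuple `f` solving the eigenvalue equations with Dirichlet conditions at the outer
vertices and value `c` at the central vertex, and it satisfies
`∑ⱼ fⱼ'(0) = −μ(n₊ cot μ + n₋ coth μ)·c`. -/
theorem stmt_4 (np nm : ℕ) (hp : 1 ≤ np) (hm : 1 ≤ nm) (μ : ℝ) (hμ : 0 < μ)
    (hsin : Real.sin μ ≠ 0) (c : ℂ) :
    (∃! f : Fin (np + nm) → ℝ → ℂ, KirchhoffData np nm (μ ^ 2) c f) ∧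
    (∀ f : Fin (np + nm) → ℝ → ℂ, KirchhoffData np nm (μ ^ 2) c f →
      ∑ j : Fin (np + nm), deriv (f j) 0
        = -(μ : ℂ) * ((np : ℂ) * ((Real.cos μ / Real.sin μ : ℝ) : ℂ)
            + (nm : ℂ) * ((Real.cosh μ / Real.sinh μ : ℝ) : ℂ)) * c) := by
  have hsinh : Real.sinh μ ≠ 0 := (Real.sinh_pos_iff.2 hμ).ne'
  push_cast
  exact stmt_4_general np nm (μ ^ 2) μ (ofReal_pow μ 2) (by exact_mod_cast hsin)
    (by exact_mod_cast hsinh) c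
end

section
/- Let n ≥ 1 be an integer and let f = (f₁, …, f_n) be an n-tuple of twice continuously differentiable functions f_j : [0,1] → ℂ with f_j(1) = 0 for all j, f₁(0) = ⋯ = f_n(0), and ∑_{j=1}^n f_j'(0) = 0. Then ∑_{j=1}^n ∫₀¹ (−f_j''(x))·conj(f_j(x)) dx = ∑_{j=1}^n ∫₀¹ |f_j'(x)|² dx, and this quantity is ≥ ∑_{j=1}^n ∫₀¹ |f_j(x)|² dx; in particular it is strictly positive whenever f ≠ 0. -/
open MeasureTheory

/-!
On each edge, integrating `(⟪f, f'⟫)' = ⟪f, f''⟫ + ‖f'‖²` gives Green's identity. The boundary terms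
vanish at the outer vertices by the Dirichlet condition, and at the central vertex they add up to
`⟪v, ∑ⱼ fⱼ'(0)⟫ = 0`, where `v` is the common value of the `fⱼ`. The Dirichlet condition and
Cauchy–Schwarz also give `‖fⱼ(x)‖² ≤ (1 - x) ∫₀¹ ‖fⱼ'‖²`, which implies positivity and, after
integration in `x`, the Poincaré inequality with constant `1/2`.
-/

open Set

theorem sq_integral_le_measureReal_mul_integral_sq {α : Type*} [MeasurableSpace α] {μ : Measure α}
    [IsFiniteMeasure μ] {φ : α → ℝ} (hφ : MemLp φ 2 μ) :
    (∫ x, φ x ∂μ) ^ 2 ≤ μ.real univ * ∫ x, φ x ^ 2 ∂μ := by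
  rcases eq_zero_or_neZero μ with rfl | _
  · simp
  have jensen : (⨍ x, φ x ∂μ) ^ 2 ≤ ⨍ x, φ x ^ 2 ∂μ :=
    even_two.convexOn_pow.map_average_le (continuous_pow 2).continuousOn isClosed_univ
      (ae_of_all _ fun _ ↦ mem_univ _) (hφ.integrable one_le_two) hφ.integrable_sq
  have mass_pos : 0 < μ.real univ := measureReal_univ_pos
  rw [average_eq, average_eq, smul_eq_mul, smul_eq_mul] at jensen
  field_simp at jensen
  exact jensen

section Dirichlet

variable {E : Type*} [NormedAddCommGroup E] [NormedSpace ℝ E] {f f' : ℝ → E} {a b : ℝ}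

theorem sq_norm_sub_le_mul_integral_sq_norm_deriv (hab : a ≤ b) (hf : ContinuousOn f (Icc a b))
    (hderiv : ∀ x ∈ Ioo a b, HasDerivAt f (f' x) x)
    (hf' : MemLp f' 2 (volume.restrict (Ioc a b))) :
    ‖f b - f a‖ ^ 2 ≤ (b - a) * ∫ x in a..b, ‖f' x‖ ^ 2 := by
  have norm_sub_le : ‖f b - f a‖ ≤ ∫ x in a..b, ‖f' x‖ :=
    norm_sub_le_integral_of_norm_deriv_le_of_le hab hf
      (fun x hx ↦ (hderiv x hx).differentiableAt.differentiableWithinAt)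
      (ae_of_all _ fun x hx ↦ (congrArg norm (hderiv x hx).deriv).le)
      ((intervalIntegrable_iff_integrableOn_Ioc_of_le hab).2 (hf'.integrable one_le_two).norm)
  have cauchy_schwarz := sq_integral_le_measureReal_mul_integral_sq hf'.norm
  rw [measureReal_restrict_apply_univ, Real.volume_real_Ioc_of_le hab,
    ← intervalIntegral.integral_of_le hab, ← intervalIntegral.integral_of_le hab] at cauchy_schwarz
  exact (pow_le_pow_left₀ (norm_nonneg _) norm_sub_le 2).trans cauchy_schwarz

theorem sq_norm_le_mul_integral_sq_norm_deriv_of_right_eq_zero (hf : ContinuousOn f (Icc a b))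
    (hderiv : ∀ x ∈ Ioo a b, HasDerivAt f (f' x) x)
    (hf' : MemLp f' 2 (volume.restrict (Ioc a b))) (hfb : f b = 0) {x : ℝ} (hx : x ∈ Icc a b) :
    ‖f x‖ ^ 2 ≤ (b - x) * ∫ t in a..b, ‖f' t‖ ^ 2 := by
  have hab : a ≤ b := hx.1.trans hx.2
  have tail_le : ∫ t in x..b, ‖f' t‖ ^ 2 ≤ ∫ t in a..b, ‖f' t‖ ^ 2 :=
    intervalIntegral.integral_mono_interval hx.1 hx.2 le_rfl (ae_of_all _ fun t ↦ sq_nonneg _)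
      ((intervalIntegrable_iff_integrableOn_Ioc_of_le hab).2 hf'.norm.integrable_sq)
  calc ‖f x‖ ^ 2 = ‖f b - f x‖ ^ 2 := by rw [hfb, zero_sub, norm_neg]
    _ ≤ (b - x) * ∫ t in x..b, ‖f' t‖ ^ 2 :=
      sq_norm_sub_le_mul_integral_sq_norm_deriv hx.2 (hf.mono (Icc_subset_Icc_left hx.1))
        (fun t ht ↦ hderiv t (Ioo_subset_Ioo_left hx.1 ht))
        (hf'.mono_measure (Measure.restrict_mono (Ioc_subset_Ioc_left hx.1) le_rfl))
    _ ≤ (b - x) * ∫ t in a..b, ‖f' t‖ ^ 2 :=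
      mul_le_mul_of_nonneg_left tail_le (sub_nonneg.2 hx.2)

theorem integral_sq_norm_le_mul_integral_sq_norm_deriv_of_right_eq_zero (hab : a ≤ b)
    (hf : ContinuousOn f (Icc a b)) (hderiv : ∀ x ∈ Ioo a b, HasDerivAt f (f' x) x)
    (hf' : MemLp f' 2 (volume.restrict (Ioc a b))) (hfb : f b = 0) :
    ∫ x in a..b, ‖f x‖ ^ 2 ≤ (b - a) ^ 2 / 2 * ∫ x in a..b, ‖f' x‖ ^ 2 := by
  calc ∫ x in a..b, ‖f x‖ ^ 2 ≤ ∫ x in a..b, (b - x) * ∫ t in a..b, ‖f' t‖ ^ 2 :=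
      intervalIntegral.integral_mono_on hab ((hf.norm.pow 2).intervalIntegrable_of_Icc hab)
        (Continuous.intervalIntegrable (by fun_prop) _ _)
        fun x hx ↦ sq_norm_le_mul_integral_sq_norm_deriv_of_right_eq_zero hf hderiv hf' hfb hx
    _ = (b - a) ^ 2 / 2 * ∫ x in a..b, ‖f' x‖ ^ 2 := by
      have integral_sub_left : ∫ x in a..b, (b - x) = (b - a) ^ 2 / 2 := by
        simp [intervalIntegral.integral_comp_sub_left fun x : ℝ ↦ x]
      rw [intervalIntegral.integral_mul_const, integral_sub_left]

end Dirichlet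

section Kirchhoff

variable {𝕜 E : Type*} [RCLike 𝕜] [NormedAddCommGroup E] [InnerProductSpace 𝕜 E]

theorem intervalIntegrable_inner_of_continuousOn {f g : ℝ → E} {a b : ℝ} {μ : Measure ℝ}
    (hf : ContinuousOn f (uIcc a b)) (hg : IntervalIntegrable g μ a b) :
    IntervalIntegrable (fun x ↦ inner 𝕜 (f x) (g x)) μ a b :=
  (hg.norm.continuousOn_mul hf.norm).mono_fun'
    (((hf.mono uIoc_subset_uIcc).aestronglyMeasurable measurableSet_uIoc).inner
      hg.def'.aestronglyMeasurable)
    (ae_of_all _ fun x ↦ norm_inner_le_norm (f x) (g x))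

variable [NormedSpace ℝ E]

theorem integral_inner_neg_deriv_deriv {f f' f'' : ℝ → E} {a b : ℝ} (hab : a ≤ b)
    (hf : ContinuousOn f (Icc a b)) (hf' : ContinuousOn f' (Icc a b))
    (hderiv : ∀ x ∈ Ioo a b, HasDerivAt f (f' x) x)
    (hderiv' : ∀ x ∈ Ioo a b, HasDerivAt f' (f'' x) x)
    (hf'' : IntervalIntegrable f'' volume a b) :
    ∫ x in a..b, inner 𝕜 (f x) (-f'' x) =
      inner 𝕜 (f a) (f' a) - inner 𝕜 (f b) (f' b) + ((∫ x in a..b, ‖f' x‖ ^ 2 : ℝ) : 𝕜) := by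
  have integrable_deriv_deriv :
      IntervalIntegrable (fun x ↦ inner 𝕜 (f x) (f'' x)) volume a b :=
    intervalIntegrable_inner_of_continuousOn (by rwa [uIcc_of_le hab]) hf''
  have integrable_deriv_self :
      IntervalIntegrable (fun x ↦ inner 𝕜 (f' x) (f' x)) volume a b :=
    (hf'.inner hf').intervalIntegrable_of_Icc hab
  have green : ∫ x in a..b, (inner 𝕜 (f x) (f'' x) + inner 𝕜 (f' x) (f' x)) =
      inner 𝕜 (f b) (f' b) - inner 𝕜 (f a) (f' a) :=
    intervalIntegral.integral_eq_sub_of_hasDerivAt_of_le hab (hf.inner hf')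
      (fun x hx ↦ (hderiv x hx).inner 𝕜 (hderiv' x hx))
      (integrable_deriv_deriv.add integrable_deriv_self)
  have integral_deriv_self :
      ∫ x in a..b, inner 𝕜 (f' x) (f' x) = ((∫ x in a..b, ‖f' x‖ ^ 2 : ℝ) : 𝕜) := by
    simp only [inner_self_eq_norm_sq_to_K, ← RCLike.ofReal_pow]
    exact RCLike.intervalIntegral_ofReal
  rw [intervalIntegral.integral_add integrable_deriv_deriv integrable_deriv_self,
    integral_deriv_self] at green
  simp only [inner_neg_right, intervalIntegral.integral_neg]
  linear_combination -green

theorem stmt_6_general {ι : Type*} [Fintype ι] (f f' f'' : ι → ℝ → E) (v : E)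
    (hf : ∀ j, ContinuousOn (f j) (Icc 0 1)) (hf' : ∀ j, ContinuousOn (f' j) (Icc 0 1))
    (hderiv : ∀ j, ∀ x ∈ Ioo 0 1, HasDerivAt (f j) (f' j x) x)
    (hderiv' : ∀ j, ∀ x ∈ Ioo 0 1, HasDerivAt (f' j) (f'' j x) x)
    (hf'' : ∀ j, IntervalIntegrable (f'' j) volume 0 1)
    (hf1 : ∀ j, f j 1 = 0) (hf0 : ∀ j, f j 0 = v) (hK : ∑ j, f' j 0 = 0) :
    (∑ j, ∫ x in (0 : ℝ)..1, inner 𝕜 (f j x) (-f'' j x)) =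
        ((∑ j, ∫ x in (0 : ℝ)..1, ‖f' j x‖ ^ 2 : ℝ) : 𝕜) ∧
      (∑ j, ∫ x in (0 : ℝ)..1, ‖f j x‖ ^ 2) ≤
        1 / 2 * ∑ j, ∫ x in (0 : ℝ)..1, ‖f' j x‖ ^ 2 ∧
      ((∃ j, ∃ x ∈ Icc (0 : ℝ) 1, f j x ≠ 0) →
        0 < ∑ j, ∫ x in (0 : ℝ)..1, ‖f' j x‖ ^ 2) := by
  have memLp_deriv (j : ι) : MemLp (f' j) 2 (volume.restrict (Ioc 0 1)) :=
    (memLp_two_iff_integrable_sq_norm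
      (((hf' j).mono Ioc_subset_Icc_self).aestronglyMeasurable measurableSet_Ioc)).2
      (((hf' j).norm.pow 2).integrableOn_Icc.mono_set Ioc_subset_Icc_self)
  refine ⟨?_, ?_, ?_⟩
  · have green (j : ι) := integral_inner_neg_deriv_deriv (𝕜 := 𝕜) zero_le_one
      (hf j) (hf' j) (hderiv j) (hderiv' j) (hf'' j)
    simp only [green, hf0, hf1, inner_zero_left, sub_zero]
    rw [Finset.sum_add_distrib, ← inner_sum, hK, inner_zero_right, zero_add, RCLike.ofReal_sum]
  · rw [Finset.mul_sum]
    exact Finset.sum_le_sum fun j _ ↦ by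
      simpa using integral_sq_norm_le_mul_integral_sq_norm_deriv_of_right_eq_zero zero_le_one
        (hf j) (hderiv j) (memLp_deriv j) (hf1 j)
  · rintro ⟨j, x, hx, hfx⟩
    refine Finset.sum_pos' (fun k _ ↦ intervalIntegral.integral_nonneg zero_le_one
      fun t _ ↦ sq_nonneg _) ⟨j, Finset.mem_univ j, ?_⟩
    have sq_norm_le := sq_norm_le_mul_integral_sq_norm_deriv_of_right_eq_zero
      (hf j) (hderiv j) (memLp_deriv j) (hf1 j) hx
    exact pos_of_mul_pos_right ((pow_pos (norm_pos_iff.2 hfx) 2).trans_le sq_norm_le)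
      (sub_nonneg.2 hx.2)

end Kirchhoff

/-- For a tuple `f` in the domain of the indefinite Kirchhoff Laplacian (Dirichlet at the
outer vertices, continuity and Kirchhoff condition at the central vertex),
`∑ⱼ ∫₀¹ (−fⱼ'')·f̄ⱼ = ∑ⱼ ∫₀¹ |fⱼ'|²`, this quantity dominates `∑ⱼ ∫₀¹ |fⱼ|²`
(Poincaré), and it is strictly positive whenever `f` does not vanish on the graph. -/
theorem stmt_6 (n : ℕ) (hn : 0 < n) (f : Fin n → ℝ → ℂ)
    (hf : ∀ j, ContDiff ℝ 2 (f j))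
    (hf1 : ∀ j, f j 1 = 0)
    (hf0 : ∀ j k, f j 0 = f k 0)
    (hK : ∑ j : Fin n, deriv (f j) 0 = 0) :
    (∑ j : Fin n, ∫ x in (0:ℝ)..1, (-(deriv (deriv (f j)) x)) * (starRingEnd ℂ) (f j x))
      = ((∑ j : Fin n, ∫ x in (0:ℝ)..1, ‖deriv (f j) x‖ ^ 2 : ℝ) : ℂ) ∧
    (∑ j : Fin n, ∫ x in (0:ℝ)..1, ‖f j x‖ ^ 2)
      ≤ ∑ j : Fin n, ∫ x in (0:ℝ)..1, ‖deriv (f j) x‖ ^ 2 ∧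
    ((∃ j : Fin n, ∃ x ∈ Set.Icc (0:ℝ) 1, f j x ≠ 0) →
      0 < ∑ j : Fin n, ∫ x in (0:ℝ)..1, ‖deriv (f j) x‖ ^ 2) := by
  have hf' (j : Fin n) : ContDiff ℝ 1 (deriv (f j)) := (contDiff_succ_iff_deriv.1 (hf j)).2.2
  obtain ⟨energy_eq, poincare, energy_pos⟩ := stmt_6_general (𝕜 := ℂ) f (fun j ↦ deriv (f j))
    (fun j ↦ deriv (deriv (f j))) (f ⟨0, hn⟩ 0) (fun j ↦ (hf j).continuous.continuousOn)
    (fun j ↦ (hf' j).continuous.continuousOn)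
    (fun j x _ ↦ ((hf j).differentiable two_ne_zero x).hasDerivAt)
    (fun j x _ ↦ ((hf' j).differentiable one_ne_zero x).hasDerivAt)
    (fun j ↦ ((hf' j).continuous_deriv le_rfl).intervalIntegrable 0 1)
    hf1 (fun j ↦ hf0 j ⟨0, hn⟩) hK
  have sq_norm_nonneg : 0 ≤ ∑ j : Fin n, ∫ x in (0:ℝ)..1, ‖f j x‖ ^ 2 :=
    Finset.sum_nonneg fun j _ ↦ intervalIntegral.integral_nonneg zero_le_one fun x _ ↦ sq_nonneg _
  exact ⟨energy_eq, by linarith, energy_pos⟩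
end

section
/- Fix integers n₊ ≥ 1 and n₋ ≥ 1. For every integer k ≥ 1 there exists exactly one μ in the open interval ((k−1)π, kπ) satisfying n₊·cot μ + n₋·coth μ = 0. -/
/-!
On each interval `((k - 1)π, kπ)` the cotangent decreases continuously from `+∞` to `-∞`, while
`coth` is continuous and decreasing there, since the interval does not contain `0`. Adding a
continuous decreasing function to a continuous strictly decreasing bijection onto the line yields
such a bijection again, so `p cot + m coth` takes every real value exactly once on the interval.
-/

open Set

section AddAntitone

variable {α β : Type*} [LinearOrder α] [TopologicalSpace α]
  [AddCommGroup β] [LinearOrder β] [IsOrderedAddMonoid β]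
  [TopologicalSpace β] [OrderClosedTopology β] [ContinuousAdd β]
  {f g : α → β} {s : Set α}

theorem surjOn_add_of_antitoneOn (hs : IsPreconnected s)
    (hf_cont : ContinuousOn f s) (hg_cont : ContinuousOn g s)
    (hf_anti : AntitoneOn f s) (hg_anti : AntitoneOn g s) (hf_surj : SurjOn f s univ) :
    SurjOn (f + g) s univ := by
  intro c _
  obtain ⟨x₀, hx₀, hfx₀⟩ := hf_surj (mem_univ 0)
  -- Monotonicity of `g` puts the values of `f + g` at `x₀` and at this `x₁` on either side of `c`.
  obtain ⟨x₁, hx₁, hfx₁⟩ := hf_surj (mem_univ (c - g x₀))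
  have h_sum_cont : ContinuousOn (f + g) s := hf_cont.add hg_cont
  have h_value₀ : (f + g) x₀ = g x₀ := by rw [Pi.add_apply, hfx₀, zero_add]
  have h_value₁ : (f + g) x₁ = c - g x₀ + g x₁ := by rw [Pi.add_apply, hfx₁]
  rcases le_total x₁ x₀ with h_le | h_le
  · have hf_le : 0 ≤ c - g x₀ := hfx₀ ▸ hfx₁ ▸ hf_anti hx₁ hx₀ h_le
    have hg_le : g x₀ ≤ g x₁ := hg_anti hx₁ hx₀ h_le
    refine hs.intermediate_value hx₀ hx₁ h_sum_cont ⟨?_, ?_⟩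
    · exact h_value₀ ▸ sub_nonneg.mp hf_le
    · rw [h_value₁, sub_add]
      exact le_sub_self_iff c |>.mpr (sub_nonpos.mpr hg_le)
  · have hf_le : c - g x₀ ≤ 0 := hfx₀ ▸ hfx₁ ▸ hf_anti hx₀ hx₁ h_le
    have hg_le : g x₁ ≤ g x₀ := hg_anti hx₀ hx₁ h_le
    refine hs.intermediate_value hx₁ hx₀ h_sum_cont ⟨?_, ?_⟩
    · rw [h_value₁, sub_add]
      exact sub_le_self c (sub_nonneg.mpr hg_le)
    · exact h_value₀ ▸ sub_nonpos.mp hf_le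

theorem bijOn_add_of_strictAntiOn (hs : IsPreconnected s)
    (hf_cont : ContinuousOn f s) (hg_cont : ContinuousOn g s)
    (hf_anti : StrictAntiOn f s) (hg_anti : AntitoneOn g s) (hf_surj : SurjOn f s univ) :
    BijOn (f + g) s univ :=
  ⟨mapsTo_univ _ _, (hf_anti.add_antitone hg_anti).injOn,
    surjOn_add_of_antitoneOn hs hf_cont hg_cont hf_anti.antitoneOn hg_anti hf_surj⟩

end AddAntitone

section Cotangent

theorem cot_eq_neg_tan_sub (k : ℤ) (x : ℝ) :
    Real.cot x = -Real.tan (x - (k - 1 / 2) * Real.pi) := by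
  have h_shift : x - (k - 1 / 2) * Real.pi = -(Real.pi / 2 - x) - k * Real.pi + Real.pi := by ring
  rw [h_shift, Real.tan_add_pi, Real.tan_sub_int_mul_pi, Real.tan_neg, neg_neg,
    Real.tan_pi_div_two_sub, Real.tan_inv_eq_cot]

variable (k : ℤ)

theorem mapsTo_sub_Ioo_pi_div_two :
    MapsTo (fun x : ℝ ↦ x - (k - 1 / 2) * Real.pi) (Ioo ((k - 1) * Real.pi) (k * Real.pi))
      (Ioo (-(Real.pi / 2)) (Real.pi / 2)) :=
  fun _ ⟨h_left, h_right⟩ ↦ ⟨by linarith, by linarith⟩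

theorem strictAntiOn_cot_Ioo :
    StrictAntiOn Real.cot (Ioo ((k - 1) * Real.pi) (k * Real.pi)) := by
  intro x hx y hy hxy
  rw [cot_eq_neg_tan_sub k x, cot_eq_neg_tan_sub k y, neg_lt_neg_iff]
  exact Real.strictMonoOn_tan (mapsTo_sub_Ioo_pi_div_two k hx) (mapsTo_sub_Ioo_pi_div_two k hy)
    (sub_lt_sub_right hxy _)

theorem continuousOn_cot_Ioo :
    ContinuousOn Real.cot (Ioo ((k - 1) * Real.pi) (k * Real.pi)) := by
  rw [funext (cot_eq_neg_tan_sub k)]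
  exact (Real.continuousOn_tan_Ioo.comp (by fun_prop) (mapsTo_sub_Ioo_pi_div_two k)).neg

theorem surjOn_cot_Ioo :
    SurjOn Real.cot (Ioo ((k - 1) * Real.pi) (k * Real.pi)) univ := by
  intro c _
  obtain ⟨t, ⟨h_left, h_right⟩, ht⟩ := Real.surjOn_tan (mem_univ (-c))
  refine ⟨t + (k - 1 / 2) * Real.pi, ⟨by linarith, by linarith⟩, ?_⟩
  rw [cot_eq_neg_tan_sub k, add_sub_cancel_right, ht, neg_neg]

theorem zero_notMem_Ioo_int_mul_pi : (0 : ℝ) ∉ Ioo ((k - 1) * Real.pi) (k * Real.pi) := by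
  rintro ⟨h_left, h_right⟩
  have h_lt_one : (k : ℝ) < 1 := sub_neg.mp (neg_of_mul_neg_left h_left Real.pi_pos.le)
  have h_pos : (0 : ℝ) < k := pos_of_mul_pos_left h_right Real.pi_pos.le
  norm_cast at h_lt_one h_pos
  omega

end Cotangent

section HyperbolicCotangent

variable {s : Set ℝ}

theorem continuousOn_cosh_div_sinh (h_zero : 0 ∉ s) :
    ContinuousOn (fun x ↦ Real.cosh x / Real.sinh x) s :=
  Real.continuous_cosh.continuousOn.div Real.continuous_sinh.continuousOn fun _ hx h_sinh ↦
    h_zero (Real.sinh_eq_zero.mp h_sinh ▸ hx)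

theorem antitoneOn_cosh_div_sinh (hs : s.OrdConnected) (h_zero : 0 ∉ s) :
    AntitoneOn (fun x ↦ Real.cosh x / Real.sinh x) s := by
  intro x hx y hy hxy
  have hx_ne : Real.sinh x ≠ 0 := Real.sinh_ne_zero.mpr fun h ↦ h_zero (h ▸ hx)
  have hy_ne : Real.sinh y ≠ 0 := Real.sinh_ne_zero.mpr fun h ↦ h_zero (h ▸ hy)
  have h_same_sign : 0 ≤ Real.sinh x * Real.sinh y := by
    rcases le_total 0 x with hx_nonneg | hx_nonpos
    · exact mul_nonneg (Real.sinh_nonneg_iff.mpr hx_nonneg)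
        (Real.sinh_nonneg_iff.mpr (hx_nonneg.trans hxy))
    · have hy_nonpos : y ≤ 0 := le_of_not_ge fun hy_nonneg ↦
        h_zero (hs.out hx hy ⟨hx_nonpos, hy_nonneg⟩)
      exact mul_nonneg_of_nonpos_of_nonpos (Real.sinh_nonpos_iff.mpr hx_nonpos)
        (Real.sinh_nonpos_iff.mpr hy_nonpos)
  have h_difference : Real.cosh x / Real.sinh x - Real.cosh y / Real.sinh y =
      Real.sinh (y - x) / (Real.sinh x * Real.sinh y) := by
    rw [div_sub_div _ _ hx_ne hy_ne, Real.sinh_sub]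
    ring
  refine sub_nonneg.mp (h_difference ▸ div_nonneg ?_ h_same_sign)
  exact Real.sinh_nonneg_iff.mpr (sub_nonneg.mpr hxy)

end HyperbolicCotangent

theorem bijOn_mul_cot_add_mul_cosh_div_sinh {p m : ℝ} (hp : 0 < p) (hm : 0 ≤ m) (k : ℤ) :
    BijOn (fun x ↦ p * Real.cot x + m * (Real.cosh x / Real.sinh x))
      (Ioo ((k - 1) * Real.pi) (k * Real.pi)) univ := by
  have h_zero := zero_notMem_Ioo_int_mul_pi k
  have h_surj : SurjOn (fun x ↦ p * Real.cot x) (Ioo ((k - 1) * Real.pi) (k * Real.pi)) univ :=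
    (mul_left_surjective₀ hp.ne').surjOn.comp (surjOn_cot_Ioo k)
  exact bijOn_add_of_strictAntiOn isPreconnected_Ioo
    (continuousOn_const.mul (continuousOn_cot_Ioo k))
    (continuousOn_const.mul (continuousOn_cosh_div_sinh h_zero))
    (fun _ hx _ hy hxy ↦ mul_lt_mul_of_pos_left (strictAntiOn_cot_Ioo k hx hy hxy) hp)
    (fun _ hx _ hy hxy ↦
      mul_le_mul_of_nonneg_left (antitoneOn_cosh_div_sinh ordConnected_Ioo h_zero hx hy hxy) hm)
    h_surj

theorem stmt_7_general {p m : ℝ} (hp : 0 < p) (hm : 0 ≤ m) (k : ℤ) (c : ℝ) :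
    ∃! μ : ℝ, μ ∈ Ioo ((k - 1) * Real.pi) (k * Real.pi) ∧
      p * (Real.cos μ / Real.sin μ) + m * (Real.cosh μ / Real.sinh μ) = c := by
  have h_bij := bijOn_mul_cot_add_mul_cosh_div_sinh hp hm k
  simp only [Real.cot_eq_cos_div_sin] at h_bij
  obtain ⟨μ, hμ, h_eq⟩ := h_bij.surjOn (mem_univ c)
  exact ⟨μ, ⟨hμ, h_eq⟩, fun ν ⟨hν, hν_eq⟩ ↦ h_bij.injOn hν hμ (hν_eq.trans h_eq.symm)⟩

/-- For all integers `n₊, n₋ ≥ 1` and every integer `k ≥ 1` there is exactly one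
`μ ∈ ((k−1)π, kπ)` with `n₊·cot μ + n₋·coth μ = 0`. -/
theorem stmt_7 (np nm : ℕ) (hp : 1 ≤ np) (hm : 1 ≤ nm) (k : ℕ) (hk : 1 ≤ k) :
    ∃! μ : ℝ, μ ∈ Set.Ioo (((k : ℝ) - 1) * Real.pi) ((k : ℝ) * Real.pi) ∧
      (np : ℝ) * (Real.cos μ / Real.sin μ) + (nm : ℝ) * (Real.cosh μ / Real.sinh μ) = 0 := by
  exact_mod_cast stmt_7_general (Nat.cast_pos.mpr hp) (Nat.cast_nonneg nm) k 0
end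

section
/- Fix integers n₊ ≥ 1 and n₋ ≥ 1 and set n = n₊ + n₋. Let λ > 0 be such that sin √λ ≠ 0 (i.e., λ ≠ (kπ)² for every positive integer k). If n₊·cot √λ + n₋·coth √λ = 0 then dim E_B(λ) = 1, and if n₊·cot √λ + n₋·coth √λ ≠ 0 then E_B(λ) = {0}. -/
/-- `InEigenspaceB np nm lam f` says that the tuple `f = (f₁, …, f_n)`, `n = np + nm`,
lies in the `λ`-eigenspace `E_B(λ)` of the indefinite Kirchhoff Laplacian `B`: the `fⱼ`
are twice continuously differentiable, `fⱼ'' = −λ·fⱼ` on the first `np` edges,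
`fⱼ'' = λ·fⱼ` on the last `nm` edges, `fⱼ(1) = 0` (Dirichlet at the outer vertices),
`f₁(0) = ⋯ = f_n(0)` (continuity at the central vertex) and `∑ⱼ fⱼ'(0) = 0`
(Kirchhoff condition). -/
def InEigenspaceB (np nm : ℕ) (lam : ℝ) (f : Fin (np + nm) → ℝ → ℂ) : Prop :=
  (∀ j, ContDiff ℝ 2 (f j)) ∧
  (∀ j : Fin (np + nm), (j : ℕ) < np →
    ∀ x : ℝ, deriv (deriv (f j)) x = -(lam : ℂ) * f j x) ∧
  (∀ j : Fin (np + nm), np ≤ (j : ℕ) →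
    ∀ x : ℝ, deriv (deriv (f j)) x = (lam : ℂ) * f j x) ∧
  (∀ j, f j 1 = 0) ∧
  (∀ j k, f j 0 = f k 0) ∧
  (∑ j : Fin (np + nm), deriv (f j) 0 = 0)

/-!
Write the edge equation as `f'' = μ² f`, with `μ = √λ · i` on the first `np` edges and `μ = √λ` on
the others. Factoring `d²/dx² - μ² = (d/dx ∓ μ)(d/dx ± μ)` shows that, when `sinh μ ≠ 0`, a
solution vanishing at `1` is determined by its value at `0`: it is `f 0` times
`sinh (μ (1 - x)) / sinh μ`. By continuity all edges share the same value `c` at the central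
vertex, so the only remaining condition is Kirchhoff's, which reads `c * ∑ⱼ μⱼ coth μⱼ = 0`. Since
`i coth (i s) = cot s`, this sum is `√λ` times `n₊ cot √λ + n₋ coth √λ`.
-/

open Complex

section SecondOrderODE

variable {μ : ℂ} {f f' : ℝ → ℂ}

lemma eq_mul_exp_of_hasDerivAt_s9 (hf : ∀ x, HasDerivAt f (μ * f x) x) (a x : ℝ) :
    f x = f a * exp (μ * (x - a)) := by
  have hasDerivAt_exp (y : ℝ) :
      HasDerivAt (fun y : ℝ ↦ exp (-(μ * (y - a)))) (exp (-(μ * (y - a))) * -(μ * 1)) y :=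
    (((hasDerivAt_id (y : ℂ)).sub_const (a : ℂ)).const_mul μ).neg.cexp.comp_ofReal
  have hasDerivAt_zero (y : ℝ) : HasDerivAt (fun y : ℝ ↦ f y * exp (-(μ * (y - a)))) 0 y :=
    ((hf y).mul (hasDerivAt_exp y)).congr_deriv (by ring)
  have f_mul_exp_eq : f x * exp (-(μ * (x - a))) = f a := by
    simpa using is_const_of_deriv_eq_zero (fun y ↦ (hasDerivAt_zero y).differentiableAt)
      (fun y ↦ (hasDerivAt_zero y).deriv) x a
  rw [← f_mul_exp_eq, mul_assoc, ← exp_add, neg_add_cancel, exp_zero, mul_one]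

lemma mul_eq_cosh_add_sinh_of_hasDerivAt (hf : ∀ x, HasDerivAt f (f' x) x)
    (hf' : ∀ x, HasDerivAt f' (μ ^ 2 * f x) x) (a x : ℝ) :
    μ * f x = μ * f a * cosh (μ * (x - a)) + f' a * sinh (μ * (x - a)) := by
  have sum_eq : f' x + μ * f x = (f' a + μ * f a) * exp (μ * (x - a)) :=
    eq_mul_exp_of_hasDerivAt_s9 (f := fun y ↦ f' y + μ * f y)
      (fun y ↦ ((hf' y).add ((hf y).const_mul μ)).congr_deriv (by ring)) a x
  have diff_eq : f' x - μ * f x = (f' a - μ * f a) * exp (-μ * (x - a)) :=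
    eq_mul_exp_of_hasDerivAt_s9 (f := fun y ↦ f' y - μ * f y)
      (fun y ↦ ((hf' y).sub ((hf y).const_mul μ)).congr_deriv (by ring)) a x
  rw [neg_mul] at diff_eq
  rw [cosh, sinh]
  linear_combination (sum_eq - diff_eq) / 2

end SecondOrderODE

/-- A single-edge eigenfunction: a `C²` solution of `f'' = μ² f` satisfying the Dirichlet condition
at the outer vertex `1`. As in `InEigenspaceB`, the equation is imposed on all of `ℝ`. -/
structure IsDirichletSolution (μ : ℂ) (f : ℝ → ℂ) : Prop where
  contDiff : ContDiff ℝ 2 f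
  deriv_deriv (x : ℝ) : deriv (deriv f) x = μ ^ 2 * f x
  apply_one : f 1 = 0

/-- The solution of `f'' = μ² f` with `f 0 = 1` and `f 1 = 0`, provided that `sinh μ ≠ 0`. For
`sinh μ = 0` it is the zero function, by division by zero. -/
noncomputable def dirichletProfile (μ : ℂ) (x : ℝ) : ℂ :=
  sinh (μ * (1 - x)) / sinh μ

section DirichletProfile

variable {μ : ℂ}

lemma dirichletProfile_zero (hμ : sinh μ ≠ 0) : dirichletProfile μ 0 = 1 := by
  simp [dirichletProfile, hμ]

lemma hasDerivAt_dirichletProfile (μ : ℂ) (x : ℝ) :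
    HasDerivAt (dirichletProfile μ) (-μ * (cosh (μ * (1 - x)) / sinh μ)) x := by
  have := ((((hasDerivAt_id (x : ℂ)).const_sub 1).const_mul μ).csinh.div_const
    (sinh μ)).comp_ofReal
  exact this.congr_deriv (by simp only [id]; ring)

lemma deriv_dirichletProfile (μ : ℂ) :
    deriv (dirichletProfile μ) = fun x : ℝ ↦ -μ * (cosh (μ * (1 - x)) / sinh μ) :=
  funext fun x ↦ (hasDerivAt_dirichletProfile μ x).deriv

lemma deriv_dirichletProfile_zero (μ : ℂ) :
    deriv (dirichletProfile μ) 0 = -(μ * (cosh μ / sinh μ)) := by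
  simp [deriv_dirichletProfile]

lemma deriv_deriv_dirichletProfile (μ : ℂ) (x : ℝ) :
    deriv (deriv (dirichletProfile μ)) x = μ ^ 2 * dirichletProfile μ x := by
  have := (((((hasDerivAt_id (x : ℂ)).const_sub 1).const_mul μ).ccosh.div_const
    (sinh μ)).const_mul (-μ)).comp_ofReal
  rw [deriv_dirichletProfile, dirichletProfile]
  exact (this.congr_deriv (by simp only [id]; ring)).deriv

lemma contDiff_dirichletProfile (μ : ℂ) {n : WithTop ℕ∞} : ContDiff ℝ n (dirichletProfile μ) := by
  have : ContDiff ℂ n fun z : ℂ ↦ sinh (μ * (1 - z)) / sinh μ :=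
    (contDiff_const.mul (contDiff_const.sub contDiff_id)).csinh.div_const _
  exact (this.restrict_scalars ℝ).comp ofRealCLM.contDiff

lemma isDirichletSolution_smul_dirichletProfile (μ c : ℂ) :
    IsDirichletSolution μ (c • dirichletProfile μ) where
  contDiff := contDiff_const.smul (contDiff_dirichletProfile μ)
  deriv_deriv x := by
    have deriv_smul : deriv (c • dirichletProfile μ) = c • deriv (dirichletProfile μ) :=
      funext fun _ ↦ deriv_const_smul_field c _
    rw [deriv_smul, deriv_const_smul_field, deriv_deriv_dirichletProfile, Pi.smul_apply,
      mul_smul_comm]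
  apply_one := by simp [dirichletProfile]

lemma IsDirichletSolution.eq_smul_dirichletProfile {f : ℝ → ℂ} (hf : IsDirichletSolution μ f)
    (hμ : sinh μ ≠ 0) : f = f 0 • dirichletProfile μ := by
  have hasDerivAt_f (x : ℝ) : HasDerivAt f (deriv f x) x :=
    (hf.contDiff.differentiable two_ne_zero x).hasDerivAt
  have hasDerivAt_deriv (x : ℝ) : HasDerivAt (deriv f) (μ ^ 2 * f x) x :=
    hf.deriv_deriv x ▸ (hf.contDiff.differentiable_deriv_two x).hasDerivAt
  have mul_eq (x : ℝ) : μ * f x = -(deriv f 1 * sinh (μ * (1 - x))) := by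
    have := mul_eq_cosh_add_sinh_of_hasDerivAt hasDerivAt_f hasDerivAt_deriv 1 x
    rw [hf.apply_one, ofReal_one, ← neg_sub, mul_neg, sinh_neg] at this
    linear_combination this
  have mul_zero_eq : μ * f 0 = -(deriv f 1 * sinh μ) := by simpa using mul_eq 0
  have μ_ne_zero : μ ≠ 0 := fun h ↦ hμ (by rw [h, sinh_zero])
  funext x
  simp only [Pi.smul_apply, smul_eq_mul, dirichletProfile]
  rw [← mul_div_assoc, eq_div_iff hμ]
  apply mul_left_cancel₀ μ_ne_zero
  linear_combination sinh μ * mul_eq x - sinh (μ * (1 - x)) * mul_zero_eq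

end DirichletProfile

/-- Eigenfunctions on a star graph whose edge `j` carries the equation `f'' = (μ j)² f`, with
Dirichlet conditions at the outer vertices and continuity and Kirchhoff conditions at the central
vertex `0`. -/
structure IsStarEigenfunction {ι : Type*} [Fintype ι] (μ : ι → ℂ) (f : ι → ℝ → ℂ) : Prop where
  isDirichletSolution (j : ι) : IsDirichletSolution (μ j) (f j)
  continuity (j k : ι) : f j 0 = f k 0
  kirchhoff : ∑ j, deriv (f j) 0 = 0

section StarGraph

variable {ι : Type*} [Fintype ι] {μ : ι → ℂ}

lemma sum_deriv_smul_dirichletProfile_zero (μ : ι → ℂ) (c : ℂ) :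
    ∑ j, deriv (c • dirichletProfile (μ j)) 0 = -(c * ∑ j, μ j * (cosh (μ j) / sinh (μ j))) := by
  simp only [deriv_const_smul_field, deriv_dirichletProfile_zero, smul_eq_mul, mul_neg,
    Finset.sum_neg_distrib, Finset.mul_sum]

theorem isStarEigenfunction_iff (hμ : ∀ j, sinh (μ j) ≠ 0) {f : ι → ℝ → ℂ} :
    IsStarEigenfunction μ f ↔ ∃ c : ℂ, (f = c • fun j ↦ dirichletProfile (μ j)) ∧
      c * ∑ j, μ j * (cosh (μ j) / sinh (μ j)) = 0 := by
  constructor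
  · intro hf
    obtain ⟨c, hc⟩ : ∃ c, ∀ j, f j 0 = c := by
      rcases isEmpty_or_nonempty ι with _ | ⟨⟨i⟩⟩
      · exact ⟨0, isEmptyElim⟩
      · exact ⟨f i 0, fun j ↦ hf.continuity j i⟩
    have f_eq (j : ι) : f j = c • dirichletProfile (μ j) :=
      hc j ▸ (hf.isDirichletSolution j).eq_smul_dirichletProfile (hμ j)
    refine ⟨c, funext f_eq, ?_⟩
    rw [← neg_eq_zero, ← sum_deriv_smul_dirichletProfile_zero, ← hf.kirchhoff]
    simp only [f_eq]
  · rintro ⟨c, rfl, hc⟩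
    exact
      { isDirichletSolution j := isDirichletSolution_smul_dirichletProfile (μ j) c
        continuity j k := by simp [dirichletProfile_zero, hμ]
        kirchhoff := (sum_deriv_smul_dirichletProfile_zero μ c).trans (by rw [hc, neg_zero]) }

end StarGraph

/-- The numbers `μ j` for which the edge equations of `B` at `λ = s²` read `f'' = (μ j)² f`:
`s · i` on the first `np` edges and `s` on the last `nm` ones. -/
noncomputable def edgeExponent (np nm : ℕ) (s : ℝ) : Fin (np + nm) → ℂ :=
  Fin.append (fun _ ↦ s * I) (fun _ ↦ s)

section EdgeExponent

variable {np nm : ℕ} {s : ℝ}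

lemma inEigenspaceB_sq_iff {f : Fin (np + nm) → ℝ → ℂ} :
    InEigenspaceB np nm (s ^ 2) f ↔ IsStarEigenfunction (edgeExponent np nm s) f := by
  have edge_equations_iff :
      ((∀ j : Fin (np + nm), (j : ℕ) < np →
          ∀ x : ℝ, deriv (deriv (f j)) x = -((s ^ 2 : ℝ) : ℂ) * f j x) ∧
        ∀ j : Fin (np + nm), np ≤ (j : ℕ) →
          ∀ x : ℝ, deriv (deriv (f j)) x = ((s ^ 2 : ℝ) : ℂ) * f j x) ↔
      ∀ j x, deriv (deriv (f j)) x = edgeExponent np nm s j ^ 2 * f j x := by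
    simp [Fin.forall_fin_add, edgeExponent, mul_pow]
  constructor
  · rintro ⟨contDiff, eq_pos, eq_neg, dirichlet, continuity, kirchhoff⟩
    have edge_equation := edge_equations_iff.1 ⟨eq_pos, eq_neg⟩
    exact ⟨fun j ↦ ⟨contDiff j, edge_equation j, dirichlet j⟩, continuity, kirchhoff⟩
  · rintro ⟨edge, continuity, kirchhoff⟩
    obtain ⟨eq_pos, eq_neg⟩ := edge_equations_iff.2 fun j ↦ (edge j).deriv_deriv
    exact ⟨fun j ↦ (edge j).contDiff, eq_pos, eq_neg, fun j ↦ (edge j).apply_one, continuity,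
      kirchhoff⟩

lemma sinh_edgeExponent_ne_zero (hs : s ≠ 0) (hsin : Real.sin s ≠ 0) (j : Fin (np + nm)) :
    sinh (edgeExponent np nm s j) ≠ 0 := by
  have sin_ne_zero : sin (s : ℂ) ≠ 0 := mod_cast hsin
  have sinh_ne_zero : sinh (s : ℂ) ≠ 0 := mod_cast Real.sinh_ne_zero.2 hs
  cases j using Fin.addCases <;>
    simp [edgeExponent, sinh_mul_I, sin_ne_zero, sinh_ne_zero]

lemma sum_edgeExponent_mul_coth (np nm : ℕ) (s : ℝ) :
    ∑ j, edgeExponent np nm s j * (cosh (edgeExponent np nm s j) / sinh (edgeExponent np nm s j)) =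
      s * ((np * (Real.cos s / Real.sin s) + nm * (Real.cosh s / Real.sinh s) : ℝ) : ℂ) := by
  have I_mul_coth : I * (cosh (s * I) / sinh (s * I)) = cos s / sin s := by
    rw [cosh_mul_I, sinh_mul_I, ← div_div, mul_div_cancel₀ _ I_ne_zero]
  simp only [edgeExponent, Fin.sum_univ_add, Fin.append_left, Fin.append_right, Finset.sum_const,
    Finset.card_univ, Fintype.card_fin, nsmul_eq_mul, mul_assoc, I_mul_coth]
  push_cast
  ring

theorem inEigenspaceB_sq_iff_exists_smul (hs : s ≠ 0) (hsin : Real.sin s ≠ 0)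
    {f : Fin (np + nm) → ℝ → ℂ} :
    InEigenspaceB np nm (s ^ 2) f ↔
      ∃ c : ℂ, (f = c • fun j ↦ dirichletProfile (edgeExponent np nm s j)) ∧
        (c = 0 ∨ np * (Real.cos s / Real.sin s) + nm * (Real.cosh s / Real.sinh s) = 0) := by
  rw [inEigenspaceB_sq_iff, isStarEigenfunction_iff (sinh_edgeExponent_ne_zero hs hsin),
    sum_edgeExponent_mul_coth]
  simp only [mul_eq_zero, ofReal_eq_zero, hs, false_or]

end EdgeExponent

/-- For `λ > 0` with `sin √λ ≠ 0`: if `n₊ cot √λ + n₋ coth √λ = 0` then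
`dim E_B(λ) = 1`, and otherwise `E_B(λ) = {0}`. -/
theorem stmt_9 (np nm : ℕ) (hp : 1 ≤ np) (hm : 1 ≤ nm) (lam : ℝ) (hlam : 0 < lam)
    (hsin : Real.sin (Real.sqrt lam) ≠ 0) :
    ((np : ℝ) * (Real.cos (Real.sqrt lam) / Real.sin (Real.sqrt lam))
        + (nm : ℝ) * (Real.cosh (Real.sqrt lam) / Real.sinh (Real.sqrt lam)) = 0 →
      ∃ f : Fin (np + nm) → ℝ → ℂ, InEigenspaceB np nm lam f ∧ f ≠ 0 ∧
        ∀ g : Fin (np + nm) → ℝ → ℂ, InEigenspaceB np nm lam g → ∃ c : ℂ, g = c • f) ∧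
    ((np : ℝ) * (Real.cos (Real.sqrt lam) / Real.sin (Real.sqrt lam))
        + (nm : ℝ) * (Real.cosh (Real.sqrt lam) / Real.sinh (Real.sqrt lam)) ≠ 0 →
      ∀ f : Fin (np + nm) → ℝ → ℂ, InEigenspaceB np nm lam f → f = 0) := by
  obtain ⟨s, hs, rfl⟩ : ∃ s : ℝ, 0 < s ∧ s ^ 2 = lam :=
    ⟨√lam, Real.sqrt_pos.2 hlam, Real.sq_sqrt hlam.le⟩
  rw [Real.sqrt_sq hs.le] at hsin ⊢
  have sinh_ne_zero := sinh_edgeExponent_ne_zero (np := np) (nm := nm) hs.ne' hsin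
  simp only [inEigenspaceB_sq_iff_exists_smul hs.ne' hsin]
  constructor
  · intro hK
    refine ⟨fun j ↦ dirichletProfile (edgeExponent np nm s j), ⟨1, (one_smul ℂ _).symm, .inr hK⟩,
      fun profile_eq_zero ↦ ?_, fun g ⟨c, hg, _⟩ ↦ ⟨c, hg⟩⟩
    have apply_zero := congrFun (congrFun profile_eq_zero ⟨np, by lia⟩) 0
    exact one_ne_zero ((dirichletProfile_zero (sinh_ne_zero _)).symm.trans apply_zero)
  · rintro hK f ⟨c, rfl, hc⟩
    rw [hc.resolve_right hK, zero_smul]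
end

section
/- Fix integers n₊ ≥ 1 and n₋ ≥ 1 and set n = n₊ + n₋. For every positive integer k, the space E_B((kπ)²) consists exactly of the tuples f with f_j(x) = c_j·sin(kπx) for 1 ≤ j ≤ n₊, where c₁, …, c_{n₊} ∈ ℂ satisfy ∑_{j=1}^{n₊} c_j = 0, and f_j = 0 for n₊+1 ≤ j ≤ n; in particular dim E_B((kπ)²) = n₊ − 1. -/
/-!
A solution of `g'' = -w² g` satisfies `w g(x) = w g(0) cos (wx) + g'(0) sin (wx)` for every complex
`w`, because the two combinations of `g` and `g'` that rotate the phase by `wx` are constant.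

For `w = kπ` this governs the positive edges: since `sin w = 0 ≠ cos w`, the Dirichlet condition
at `1` forces `g(0) = 0`, so `g` is a multiple of `sin (kπx)` and the common value at the centre
is zero. For `w = kπi` it governs the negative edges: they now vanish at both ends, and
`sin (kπi) = i sinh (kπ) ≠ 0` forces them to be identically zero. The Kirchhoff condition then says
that the coefficients of the sines sum to zero, which cuts out a hyperplane of `ℂ^n₊`.
-/

section Oscillator

theorem hasDerivAt_complex_sin_mul_ofReal (w : ℂ) (x : ℝ) :
    HasDerivAt (fun y : ℝ ↦ Complex.sin (w * y)) (w * Complex.cos (w * x)) x := by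
  have h : HasDerivAt (fun z : ℂ ↦ Complex.sin (w * z)) (w * Complex.cos (w * x)) x := by
    simpa [mul_comm] using ((hasDerivAt_id (x : ℂ)).const_mul w).csin
  exact h.comp_ofReal

theorem hasDerivAt_complex_cos_mul_ofReal (w : ℂ) (x : ℝ) :
    HasDerivAt (fun y : ℝ ↦ Complex.cos (w * y)) (-(w * Complex.sin (w * x))) x := by
  have h : HasDerivAt (fun z : ℂ ↦ Complex.cos (w * z)) (-(w * Complex.sin (w * x))) x := by
    simpa [mul_comm] using ((hasDerivAt_id (x : ℂ)).const_mul w).ccos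
  exact h.comp_ofReal

variable {E : Type*} [NormedAddCommGroup E] [NormedSpace ℂ E] {g g' : ℝ → E} {w : ℂ} {L : ℝ}

theorem smul_eq_cos_smul_add_sin_smul_of_hasDerivAt (hg : ∀ x, HasDerivAt g (g' x) x)
    (hg' : ∀ x, HasDerivAt g' (-w ^ 2 • g x) x) (x : ℝ) :
    w • g x = (w * Complex.cos (w * x)) • g 0 + Complex.sin (w * x) • g' 0 := by
  have hsin := hasDerivAt_complex_sin_mul_ofReal w
  have hcos := hasDerivAt_complex_cos_mul_ofReal w
  let P : ℝ → E := fun y ↦ (w * Complex.cos (w * y)) • g y - Complex.sin (w * y) • g' y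
  let Q : ℝ → E := fun y ↦ (w * Complex.sin (w * y)) • g y + Complex.cos (w * y) • g' y
  have hP (y : ℝ) : HasDerivAt P 0 y :=
    ((((hcos y).const_mul w).smul (hg y)).sub ((hsin y).smul (hg' y))).congr_deriv (by module)
  have hQ (y : ℝ) : HasDerivAt Q 0 y :=
    ((((hsin y).const_mul w).smul (hg y)).add ((hcos y).smul (hg' y))).congr_deriv (by module)
  have hP0 : P x = w • g 0 := by
    rw [is_const_of_deriv_eq_zero (fun y ↦ (hP y).differentiableAt) (fun y ↦ (hP y).deriv) x 0]
    simp [P]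
  have hQ0 : Q x = g' 0 := by
    rw [is_const_of_deriv_eq_zero (fun y ↦ (hQ y).differentiableAt) (fun y ↦ (hQ y).deriv) x 0]
    simp [Q]
  calc w • g x
      = (w * (Complex.sin (w * x) ^ 2 + Complex.cos (w * x) ^ 2)) • g x := by
        rw [Complex.sin_sq_add_cos_sq, mul_one]
    _ = Complex.cos (w * x) • P x + Complex.sin (w * x) • Q x := by simp only [P, Q]; module
    _ = (w * Complex.cos (w * x)) • g 0 + Complex.sin (w * x) • g' 0 := by
        rw [hP0, hQ0]; module

theorem apply_zero_eq_zero_of_sin_eq_zero (hg : ∀ x, HasDerivAt g (g' x) x)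
    (hg' : ∀ x, HasDerivAt g' (-w ^ 2 • g x) x) (hw : w ≠ 0) (hsin : Complex.sin (w * L) = 0)
    (hL : g L = 0) : g 0 = 0 := by
  have hcos : Complex.cos (w * L) ≠ 0 := fun hcos ↦ by
    simpa [hsin, hcos] using Complex.sin_sq_add_cos_sq (w * L)
  have h : (w * Complex.cos (w * L)) • g 0 = 0 := by
    simpa [hL, hsin] using (smul_eq_cos_smul_add_sin_smul_of_hasDerivAt hg hg' L).symm
  exact (smul_eq_zero_iff_right (mul_ne_zero hw hcos)).1 h

theorem eq_sin_smul_of_apply_zero_eq_zero (hg : ∀ x, HasDerivAt g (g' x) x)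
    (hg' : ∀ x, HasDerivAt g' (-w ^ 2 • g x) x) (hw : w ≠ 0) (h0 : g 0 = 0) (x : ℝ) :
    g x = (Complex.sin (w * x) / w) • g' 0 := by
  have hx : w • g x = Complex.sin (w * x) • g' 0 := by
    simpa [h0] using smul_eq_cos_smul_add_sin_smul_of_hasDerivAt hg hg' x
  rw [div_eq_inv_mul, mul_smul, ← hx, inv_smul_smul₀ hw]

theorem eq_zero_of_dirichlet_of_sin_ne_zero (hg : ∀ x, HasDerivAt g (g' x) x)
    (hg' : ∀ x, HasDerivAt g' (-w ^ 2 • g x) x) (hsin : Complex.sin (w * L) ≠ 0)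
    (h0 : g 0 = 0) (hL : g L = 0) : g = 0 := by
  have hw : w ≠ 0 := by rintro rfl; simp at hsin
  have hslope : g' 0 = 0 :=
    (smul_eq_zero_iff_right (div_ne_zero hsin hw)).1
      ((eq_sin_smul_of_apply_zero_eq_zero hg hg' hw h0 L).symm.trans hL)
  funext x
  simp [eq_sin_smul_of_apply_zero_eq_zero hg hg' hw h0 x, hslope]

end Oscillator

section SumZero

variable (K ι : Type*) [Field K] [Fintype ι]

/-- The hyperplane of `ι → K` formed by the vectors whose coordinates sum to zero; it parametrizes
the eigenspace by the coefficients of the sines. -/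
def sumZeroSubmodule : Submodule K (ι → K) :=
  LinearMap.ker (∑ i, LinearMap.proj (R := K) (φ := fun _ : ι ↦ K) i)

variable {K ι} in
theorem mem_sumZeroSubmodule {c : ι → K} : c ∈ sumZeroSubmodule K ι ↔ ∑ i, c i = 0 := by
  simp [sumZeroSubmodule]

theorem finrank_sumZeroSubmodule_add_one [Nonempty ι] :
    Module.finrank K (sumZeroSubmodule K ι) + 1 = Fintype.card ι := by
  classical
  have hne : (∑ i, LinearMap.proj (R := K) (φ := fun _ : ι ↦ K) i : Module.Dual K (ι → K)) ≠ 0 :=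
    fun h ↦ by simpa using LinearMap.congr_fun h (Pi.single (Classical.arbitrary ι) 1)
  rw [sumZeroSubmodule, Module.Dual.finrank_ker_add_one_of_ne_zero hne,
    Module.finrank_fintype_fun_eq_card]

end SumZero

theorem exists_linearIndependent_spanning_of_finrank_eq {K V : Type*} [DivisionRing K]
    [AddCommGroup V] [Module K V] {S : Submodule K V} [Module.Finite K S] {n : ℕ}
    (hS : Module.finrank K S = n) :
    ∃ b : Fin n → V, (∀ i, b i ∈ S) ∧ LinearIndependent K b ∧
      ∀ v ∈ S, ∃ a : Fin n → K, v = ∑ i, a i • b i := by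
  let B := Module.finBasisOfFinrankEq K S hS
  refine ⟨fun i ↦ B i, fun i ↦ (B i).2, B.linearIndependent.map' S.subtype S.ker_subtype,
    fun v hv ↦ ⟨B.repr ⟨v, hv⟩, ?_⟩⟩
  simpa only [Submodule.coe_sum, Submodule.coe_smul] using
    congrArg Subtype.val (B.sum_repr ⟨v, hv⟩).symm

theorem sum_filter_val_lt {M : Type*} [AddCommMonoid M] {m n : ℕ} (c : Fin (m + n) → M) :
    ∑ j ∈ Finset.univ.filter (fun j : Fin (m + n) ↦ (j : ℕ) < m), c j =
      ∑ i, c (Fin.castAdd n i) := by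
  simp [Finset.sum_filter, Fin.sum_univ_add]

section SineTuple

/-- The tuple with entries `x ↦ cᵢ sin (wx)` on the `np` positive edges and `0` on the `nm`
negative edges, as a linear function of the coefficients `c`. -/
noncomputable def sineTuple (np nm : ℕ) (w : ℝ) : (Fin np → ℂ) →ₗ[ℂ] (Fin (np + nm) → ℝ → ℂ) where
  toFun c := Fin.append (fun i x ↦ c i * Complex.sin ((w * x : ℝ) : ℂ)) 0
  map_add' c d := by
    funext j x
    refine Fin.addCases (fun i ↦ ?_) (fun i ↦ ?_) j <;> simp [add_mul]
  map_smul' a c := by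
    funext j x
    refine Fin.addCases (fun i ↦ ?_) (fun i ↦ ?_) j <;> simp [mul_assoc]

variable {np nm : ℕ} {w : ℝ}

theorem sineTuple_castAdd (c : Fin np → ℂ) (i : Fin np) :
    sineTuple np nm w c (Fin.castAdd nm i) = fun x ↦ c i * Complex.sin ((w * x : ℝ) : ℂ) := by
  simp [sineTuple]

theorem sineTuple_natAdd (c : Fin np → ℂ) (i : Fin nm) :
    sineTuple np nm w c (Fin.natAdd np i) = 0 := by
  simp [sineTuple]

theorem deriv_sineTuple_castAdd (c : Fin np → ℂ) (i : Fin np) :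
    deriv (sineTuple np nm w c (Fin.castAdd nm i)) =
      fun x : ℝ ↦ c i * (w * Complex.cos (w * x)) := by
  funext x
  simpa [sineTuple_castAdd] using
    ((hasDerivAt_complex_sin_mul_ofReal w x).const_mul (c i)).deriv

theorem deriv_deriv_sineTuple_castAdd (c : Fin np → ℂ) (i : Fin np) (x : ℝ) :
    deriv (deriv (sineTuple np nm w c (Fin.castAdd nm i))) x =
      -((w ^ 2 : ℝ) : ℂ) * sineTuple np nm w c (Fin.castAdd nm i) x := by
  rw [deriv_sineTuple_castAdd,
    (((hasDerivAt_complex_cos_mul_ofReal w x).const_mul (w : ℂ)).const_mul (c i)).deriv,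
    sineTuple_castAdd]
  push_cast
  ring

theorem contDiff_sineTuple (c : Fin np → ℂ) (j : Fin (np + nm)) {n : WithTop ℕ∞} :
    ContDiff ℝ n (sineTuple np nm w c j) := by
  refine Fin.addCases (fun i ↦ ?_) (fun i ↦ ?_) j
  · simp only [sineTuple_castAdd, ← Complex.ofReal_sin]
    exact contDiff_const.mul (Complex.ofRealCLM.contDiff.comp
      (Real.contDiff_sin.comp (contDiff_const.mul contDiff_id)))
  · simpa only [sineTuple_natAdd] using! contDiff_const

theorem sineTuple_apply_eq_zero (c : Fin np → ℂ) (j : Fin (np + nm)) {x : ℝ}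
    (hx : Real.sin (w * x) = 0) : sineTuple np nm w c j x = 0 := by
  refine Fin.addCases (fun i ↦ ?_) (fun i ↦ ?_) j
  · simp only [sineTuple_castAdd, ← Complex.ofReal_sin, hx, Complex.ofReal_zero, mul_zero]
  · simp [sineTuple_natAdd]

theorem sum_deriv_sineTuple_zero (c : Fin np → ℂ) :
    ∑ j, deriv (sineTuple np nm w c j) 0 = (∑ i, c i) * w := by
  simp [Fin.sum_univ_add, deriv_sineTuple_castAdd, sineTuple_natAdd, Finset.sum_mul]

theorem sineTuple_injective (hw : w ≠ 0) : Function.Injective (sineTuple np nm w) := by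
  intro c d hcd
  funext i
  have h := congrArg (fun f ↦ deriv (f (Fin.castAdd nm i)) 0) hcd
  simpa [deriv_sineTuple_castAdd, hw] using h

theorem finrank_map_sineTuple (nm : ℕ) (hw : w ≠ 0) (hp : 1 ≤ np) :
    Module.finrank ℂ ((sumZeroSubmodule ℂ (Fin np)).map (sineTuple np nm w)) = np - 1 := by
  have : Nonempty (Fin np) := ⟨⟨0, hp⟩⟩
  have hdim := finrank_sumZeroSubmodule_add_one ℂ (Fin np)
  rw [Fintype.card_fin] at hdim
  rw [← (Submodule.equivMapOfInjective _ (sineTuple_injective hw) _).finrank_eq]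
  lia

theorem mem_map_sineTuple_iff {f : Fin (np + nm) → ℝ → ℂ} :
    f ∈ (sumZeroSubmodule ℂ (Fin np)).map (sineTuple np nm w) ↔
      ∃ c : Fin (np + nm) → ℂ,
        (∑ j ∈ Finset.univ.filter (fun j : Fin (np + nm) ↦ (j : ℕ) < np), c j) = 0 ∧
        (∀ j : Fin (np + nm), (j : ℕ) < np →
          f j = fun x : ℝ ↦ c j * Complex.sin ((w * x : ℝ) : ℂ)) ∧
        (∀ j : Fin (np + nm), np ≤ (j : ℕ) → f j = 0) := by
  simp only [Submodule.mem_map, mem_sumZeroSubmodule, sum_filter_val_lt, Fin.forall_fin_add,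
    Fin.val_castAdd, Fin.val_natAdd]
  constructor
  · rintro ⟨c, hc, rfl⟩
    refine ⟨Fin.append c 0, ?_⟩
    simp [hc, sineTuple_castAdd, sineTuple_natAdd, Fin.append_left]
  · rintro ⟨c, hc, hpos, hneg⟩
    refine ⟨fun i ↦ c (Fin.castAdd nm i), hc, funext <| (Fin.forall_fin_add _).2 ⟨?_, ?_⟩⟩
    · exact fun i ↦ (sineTuple_castAdd _ i).trans (hpos.1 i i.2).symm
    · exact fun i ↦ (sineTuple_natAdd _ i).trans (hneg.2 i (by lia)).symm

end SineTuple

section Eigenspace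

variable {np nm : ℕ} {w : ℝ}

theorem inEigenspaceB_sineTuple (hsin : Real.sin w = 0) {c : Fin np → ℂ} (hc : ∑ i, c i = 0) :
    InEigenspaceB np nm (w ^ 2) (sineTuple np nm w c) := by
  have hzero (j : Fin (np + nm)) : sineTuple np nm w c j 0 = 0 :=
    sineTuple_apply_eq_zero c j (by simp)
  refine ⟨fun j ↦ contDiff_sineTuple c j, ?_, ?_, ?_, ?_, ?_⟩
  · exact (Fin.forall_fin_add _).2
      ⟨fun i _ ↦ deriv_deriv_sineTuple_castAdd c i, fun i hi ↦ absurd hi (by simp)⟩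
  · refine (Fin.forall_fin_add _).2 ⟨fun i hi ↦ absurd hi (by simp), fun i _ x ↦ ?_⟩
    simp [sineTuple_natAdd]
  · exact fun j ↦ sineTuple_apply_eq_zero c j (by simpa using hsin)
  · exact fun i j ↦ (hzero i).trans (hzero j).symm
  · rw [sum_deriv_sineTuple_zero, hc, zero_mul]

theorem complex_sin_ofReal_mul_I_ne_zero (hw : w ≠ 0) : Complex.sin (w * Complex.I) ≠ 0 := by
  rw [Complex.sin_mul_I, ← Complex.ofReal_sinh]
  exact mul_ne_zero (Complex.ofReal_ne_zero.2 (Real.sinh_ne_zero.2 hw)) Complex.I_ne_zero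

namespace InEigenspaceB

variable {f : Fin (np + nm) → ℝ → ℂ}

theorem hasDerivAt {lam : ℝ} (hf : InEigenspaceB np nm lam f) (j : Fin (np + nm)) (x : ℝ) :
    HasDerivAt (f j) (deriv (f j) x) x :=
  ((hf.1 j).differentiable two_ne_zero x).hasDerivAt

theorem hasDerivAt_deriv_castAdd (hf : InEigenspaceB np nm (w ^ 2) f) (i : Fin np) (x : ℝ) :
    HasDerivAt (deriv (f (Fin.castAdd nm i))) (-(w : ℂ) ^ 2 • f (Fin.castAdd nm i) x) x := by
  obtain ⟨hC2, hpos, -⟩ := hf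
  exact ((hC2 _).differentiable_deriv_two x).hasDerivAt.congr_deriv
    (by simp [hpos (Fin.castAdd nm i) i.2])

theorem hasDerivAt_deriv_natAdd (hf : InEigenspaceB np nm (w ^ 2) f) (i : Fin nm) (x : ℝ) :
    HasDerivAt (deriv (f (Fin.natAdd np i)))
      (-(w * Complex.I) ^ 2 • f (Fin.natAdd np i) x) x := by
  obtain ⟨hC2, -, hneg, -⟩ := hf
  exact ((hC2 _).differentiable_deriv_two x).hasDerivAt.congr_deriv
    (by simp [hneg (Fin.natAdd np i) (by simp), mul_pow])

theorem apply_zero (hf : InEigenspaceB np nm (w ^ 2) f) (hp : 1 ≤ np) (hw : w ≠ 0)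
    (hsin : Real.sin w = 0) (j : Fin (np + nm)) : f j 0 = 0 := by
  have ⟨_, _, _, hone, hcont, _⟩ := hf
  rw [hcont j (Fin.castAdd nm ⟨0, hp⟩)]
  exact apply_zero_eq_zero_of_sin_eq_zero (L := 1) (hf.hasDerivAt _)
    (hf.hasDerivAt_deriv_castAdd _) (Complex.ofReal_ne_zero.2 hw)
    (by simp [← Complex.ofReal_sin, hsin]) (hone _)

theorem natAdd_eq_zero (hf : InEigenspaceB np nm (w ^ 2) f) (hp : 1 ≤ np) (hw : w ≠ 0)
    (hsin : Real.sin w = 0) (i : Fin nm) : f (Fin.natAdd np i) = 0 := by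
  have ⟨_, _, _, hone, _, _⟩ := hf
  exact eq_zero_of_dirichlet_of_sin_ne_zero (L := 1) (hf.hasDerivAt _)
    (hf.hasDerivAt_deriv_natAdd i) (by simpa using complex_sin_ofReal_mul_I_ne_zero hw)
    (hf.apply_zero hp hw hsin _) (hone _)

theorem exists_sineTuple_eq (hf : InEigenspaceB np nm (w ^ 2) f) (hp : 1 ≤ np) (hw : w ≠ 0)
    (hsin : Real.sin w = 0) : ∃ c : Fin np → ℂ, ∑ i, c i = 0 ∧ sineTuple np nm w c = f := by
  have hwC : (w : ℂ) ≠ 0 := Complex.ofReal_ne_zero.2 hw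
  let c : Fin np → ℂ := fun i ↦ deriv (f (Fin.castAdd nm i)) 0 / w
  have hc : sineTuple np nm w c = f := by
    refine funext <| (Fin.forall_fin_add _).2 ⟨fun i ↦ funext fun x ↦ ?_, fun i ↦ ?_⟩
    · rw [sineTuple_castAdd, eq_sin_smul_of_apply_zero_eq_zero (hf.hasDerivAt _)
        (hf.hasDerivAt_deriv_castAdd i) hwC (hf.apply_zero hp hw hsin _) x,
        smul_eq_mul]
      push_cast
      ring
    · rw [sineTuple_natAdd, hf.natAdd_eq_zero hp hw hsin]
  obtain ⟨-, -, -, -, -, hkirchhoff⟩ := hf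
  rw [← hc, sum_deriv_sineTuple_zero] at hkirchhoff
  exact ⟨c, (mul_eq_zero.1 hkirchhoff).resolve_right hwC, hc⟩

end InEigenspaceB

theorem inEigenspaceB_iff_mem_map_sineTuple (hp : 1 ≤ np) (hw : w ≠ 0) (hsin : Real.sin w = 0)
    {f : Fin (np + nm) → ℝ → ℂ} :
    InEigenspaceB np nm (w ^ 2) f ↔
      f ∈ (sumZeroSubmodule ℂ (Fin np)).map (sineTuple np nm w) := by
  simp only [Submodule.mem_map, mem_sumZeroSubmodule]
  refine ⟨fun hf ↦ hf.exists_sineTuple_eq hp hw hsin, ?_⟩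
  rintro ⟨c, hc, rfl⟩
  exact inEigenspaceB_sineTuple hsin hc

end Eigenspace

/-- `E_B((kπ)²)` consists exactly of the tuples `f` with `fⱼ(x) = cⱼ sin(kπx)` on the
first `n₊` edges, `∑_{j < n₊} cⱼ = 0`, and `fⱼ = 0` on the last `n₋` edges; in particular
`dim E_B((kπ)²) = n₊ − 1` (expressed via a basis indexed by `Fin (n₊ − 1)`). -/
theorem stmt_10 (np nm : ℕ) (hp : 1 ≤ np) (hm : 1 ≤ nm) (k : ℕ) (hk : 0 < k) :
    (∀ f : Fin (np + nm) → ℝ → ℂ,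
      InEigenspaceB np nm (((k : ℝ) * Real.pi) ^ 2) f ↔
        ∃ c : Fin (np + nm) → ℂ,
          (∑ j ∈ Finset.univ.filter (fun j : Fin (np + nm) => (j : ℕ) < np), c j) = 0 ∧
          (∀ j : Fin (np + nm), (j : ℕ) < np →
            f j = fun x : ℝ => c j * Complex.sin (((k : ℝ) * Real.pi * x : ℝ) : ℂ)) ∧
          (∀ j : Fin (np + nm), np ≤ (j : ℕ) → f j = 0)) ∧
    (∃ b : Fin (np - 1) → (Fin (np + nm) → ℝ → ℂ),
      (∀ i, InEigenspaceB np nm (((k : ℝ) * Real.pi) ^ 2) (b i)) ∧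
      LinearIndependent ℂ b ∧
      (∀ f, InEigenspaceB np nm (((k : ℝ) * Real.pi) ^ 2) f →
        ∃ a : Fin (np - 1) → ℂ, f = ∑ i : Fin (np - 1), a i • b i)) := by
  have hw : (k : ℝ) * Real.pi ≠ 0 := by positivity
  have hE (f : Fin (np + nm) → ℝ → ℂ) := inEigenspaceB_iff_mem_map_sineTuple hp hw
    (Real.sin_nat_mul_pi k) (f := f)
  simp only [hE]
  exact ⟨fun f ↦ mem_map_sineTuple_iff,
    exists_linearIndependent_spanning_of_finrank_eq (finrank_map_sineTuple nm hw hp)⟩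
end

section
/- Fix integers n₊ ≥ 1 and n₋ ≥ 1 and set n = n₊ + n₋. Let λ < 0 be such that sin √(−λ) ≠ 0 (i.e., λ ≠ −(kπ)² for every positive integer k). If n₋·cot √(−λ) + n₊·coth √(−λ) = 0 then dim E_B(λ) = 1, and if n₋·cot √(−λ) + n₊·coth √(−λ) ≠ 0 then E_B(λ) = {0}. -/
/-!
For `λ = -s²` the equation on every edge reads `f'' = a² f`, with `a = s` on the first `n₊` edges
and `a = is` on the others. If `sinh a ≠ 0`, the solutions vanishing at `1` are the multiples of
`sinh (a (1 - x)) / sinh a`, which equals `1` at `0`. Continuity at the central vertex forces the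
same multiple `c` on every edge, and the Kirchhoff condition becomes `c * ∑ a coth a = 0`. Since
`is * coth (is) = s * cot s`, the sum is `s (n₋ cot s + n₊ coth s)`.
-/

open Complex

section Edge

theorem hasDerivAt_mul_const_sub (a b z : ℂ) : HasDerivAt (fun z ↦ a * (b - z)) (-a) z := by
  simpa using ((hasDerivAt_id z).const_sub b).const_mul a

-- For fixed `x`, the right-hand side is constant in `t` and equals the left-hand side at `t = x`.
theorem mul_eq_mul_cosh_add_mul_sinh {a : ℂ} {f f' : ℝ → ℂ}
    (hf : ∀ t, HasDerivAt f (f' t) t) (hf' : ∀ t, HasDerivAt f' (a ^ 2 * f t) t) (x t : ℝ) :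
    a * f x = a * f t * cosh (a * (x - t)) + f' t * sinh (a * (x - t)) := by
  set F : ℝ → ℂ := fun t ↦ a * f t * cosh (a * (x - t)) + f' t * sinh (a * (x - t)) with hF
  have hderiv (t : ℝ) : HasDerivAt F 0 t := by
    have harg := hasDerivAt_mul_const_sub a x t
    refine ((((hf t).const_mul a).mul harg.ccosh.comp_ofReal).add
      ((hf' t).mul harg.csinh.comp_ofReal)).congr_deriv ?_
    ring
  calc
    a * f x = F x := by simp [hF]
    _ = F t := is_const_of_deriv_eq_zero (fun t ↦ (hderiv t).differentiableAt)
      (fun t ↦ (hderiv t).deriv) x t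

/-- The solution of `f'' = a² f` on the edge `[0, 1]` with `f 0 = 1` and `f 1 = 0`. It is the zero
function, by division by zero, when `sinh a = 0`. -/
noncomputable def edgeProfile (a : ℂ) (x : ℝ) : ℂ :=
  sinh (a * (1 - x)) / sinh a

theorem edgeProfile_zero {a : ℂ} (ha : sinh a ≠ 0) : edgeProfile a 0 = 1 := by
  simp [edgeProfile, ha]

theorem edgeProfile_one (a : ℂ) : edgeProfile a 1 = 0 := by
  simp [edgeProfile]

theorem contDiff_edgeProfile (a : ℂ) {n : WithTop ℕ∞} : ContDiff ℝ n (edgeProfile a) := by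
  have harg : ContDiff ℝ n fun x : ℝ ↦ a * (1 - (x : ℂ)) :=
    contDiff_const.mul (contDiff_const.sub ofRealCLM.contDiff)
  exact ((contDiff_sinh.restrict_scalars ℝ).comp harg).div_const _

theorem deriv_edgeProfile (a : ℂ) :
    deriv (edgeProfile a) = fun x : ℝ ↦ -a * cosh (a * (1 - x)) / sinh a := by
  funext x
  have hsinh := (hasDerivAt_mul_const_sub a 1 x).csinh.comp_ofReal
  refine ((hsinh.div_const _).congr_deriv ?_).deriv
  ring

theorem deriv_edgeProfile_zero (a : ℂ) :
    deriv (edgeProfile a) 0 = -(a * (cosh a / sinh a)) := by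
  simp [deriv_edgeProfile, neg_div, mul_div_assoc]

theorem deriv_deriv_edgeProfile (a : ℂ) (x : ℝ) :
    deriv (deriv (edgeProfile a)) x = a ^ 2 * edgeProfile a x := by
  rw [deriv_edgeProfile, edgeProfile]
  have hcosh := (hasDerivAt_mul_const_sub a 1 x).ccosh.comp_ofReal
  refine (((hcosh.const_mul (-a)).div_const _).congr_deriv ?_).deriv
  ring

theorem eq_smul_edgeProfile {a : ℂ} (ha : sinh a ≠ 0) {f : ℝ → ℂ} (hf : ContDiff ℝ 2 f)
    (hode : ∀ x, deriv (deriv f) x = a ^ 2 * f x) (hf₁ : f 1 = 0) :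
    f = f 0 • edgeProfile a := by
  have ha₀ : a ≠ 0 := by
    rintro rfl
    exact ha sinh_zero
  have hasDeriv (x : ℝ) : HasDerivAt f (deriv f x) x :=
    (hf.differentiable two_ne_zero x).hasDerivAt
  have hasDeriv' (x : ℝ) : HasDerivAt (deriv f) (a ^ 2 * f x) x :=
    hode x ▸ (hf.differentiable_deriv_two x).hasDerivAt
  have sinh_rep (x : ℝ) : a * f x = -deriv f 1 * sinh (a * (1 - x)) := by
    rw [mul_eq_mul_cosh_add_mul_sinh hasDeriv hasDeriv' x 1, hf₁, ofReal_one, ← neg_sub, mul_neg,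
      sinh_neg]
    ring
  have slope : a * f 0 = -deriv f 1 * sinh a := by simpa using sinh_rep 0
  funext x
  apply mul_left_cancel₀ ha₀
  calc
    a * f x = -deriv f 1 * sinh a * edgeProfile a x := by
      rw [sinh_rep, edgeProfile]
      field_simp
    _ = a * (f 0 • edgeProfile a) x := by
      rw [← slope, Pi.smul_apply, smul_eq_mul, mul_assoc]

end Edge

section Star

variable {ι : Type*} [Fintype ι] {a : ι → ℂ} {f : ι → ℝ → ℂ}

/-- A tuple of functions on a star graph with unit edges indexed by `ι`, solving `f'' = (a j)² f`
on the edge `j`, with Dirichlet conditions at the outer vertices `1` and continuity and Kirchhoff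
conditions at the central vertex `0`. As in `InEigenspaceB`, the functions are defined on
all of `ℝ`. -/
structure IsStarSolution (a : ι → ℂ) (f : ι → ℝ → ℂ) : Prop where
  contDiff : ∀ j, ContDiff ℝ 2 (f j)
  deriv_deriv : ∀ j x, deriv (deriv (f j)) x = a j ^ 2 * f j x
  dirichlet : ∀ j, f j 1 = 0
  continuity : ∀ j k, f j 0 = f k 0
  kirchhoff : ∑ j, deriv (f j) 0 = 0

theorem sum_deriv_edgeProfile_zero (a : ι → ℂ) :
    ∑ j, deriv (edgeProfile (a j)) 0 = -∑ j, a j * (cosh (a j) / sinh (a j)) := by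
  simp only [deriv_edgeProfile_zero, Finset.sum_neg_distrib]

theorem isStarSolution_edgeProfile (ha : ∀ j, sinh (a j) ≠ 0)
    (hsum : ∑ j, a j * (cosh (a j) / sinh (a j)) = 0) :
    IsStarSolution a fun j ↦ edgeProfile (a j) where
  contDiff j := contDiff_edgeProfile (a j)
  deriv_deriv j := deriv_deriv_edgeProfile (a j)
  dirichlet j := edgeProfile_one (a j)
  continuity j k := by rw [edgeProfile_zero (ha j), edgeProfile_zero (ha k)]
  kirchhoff := by rw [sum_deriv_edgeProfile_zero, hsum, neg_zero]

namespace IsStarSolution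

theorem eq_smul_edgeProfile (hf : IsStarSolution a f) (ha : ∀ j, sinh (a j) ≠ 0) (i : ι) :
    f = f i 0 • fun j ↦ edgeProfile (a j) := by
  funext j
  rw [Pi.smul_apply, hf.continuity i j]
  exact _root_.eq_smul_edgeProfile (ha j) (hf.contDiff j) (hf.deriv_deriv j) (hf.dirichlet j)

theorem eq_zero (hf : IsStarSolution a f) (ha : ∀ j, sinh (a j) ≠ 0)
    (hsum : ∑ j, a j * (cosh (a j) / sinh (a j)) ≠ 0) : f = 0 := by
  funext i
  have rep := hf.eq_smul_edgeProfile ha i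
  have deriv_eq (j : ι) : deriv (f j) 0 = f i 0 * deriv (edgeProfile (a j)) 0 := by
    rw [congrFun rep j]
    exact deriv_const_mul_field _
  have central_mul_sum : f i 0 * -∑ j, a j * (cosh (a j) / sinh (a j)) = 0 := by
    simpa only [deriv_eq, ← Finset.mul_sum, sum_deriv_edgeProfile_zero] using hf.kirchhoff
  have central_eq_zero : f i 0 = 0 :=
    (mul_eq_zero.1 central_mul_sum).resolve_right (neg_ne_zero.2 hsum)
  rw [congrFun rep i, central_eq_zero, zero_smul, Pi.zero_apply]

end IsStarSolution

end Star

section Indefinite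

variable {np nm : ℕ}

/-- The numbers `a j` for which the eigenvalue equation of `B` at `λ = -s²` reads `f'' = (a j)² f`
on the edge `j`. -/
noncomputable def waveNumber (np nm : ℕ) (s : ℂ) (j : Fin (np + nm)) : ℂ :=
  if (j : ℕ) < np then s else s * I

theorem waveNumber_sq (s : ℂ) (j : Fin (np + nm)) :
    waveNumber np nm s j ^ 2 = if (j : ℕ) < np then s ^ 2 else -s ^ 2 := by
  simp only [waveNumber, ite_pow, mul_pow, I_sq, mul_neg_one]

theorem sinh_waveNumber_ne_zero {s : ℂ} (hsinh : sinh s ≠ 0) (hsin : sin s ≠ 0)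
    (j : Fin (np + nm)) : sinh (waveNumber np nm s j) ≠ 0 := by
  unfold waveNumber
  split_ifs
  · exact hsinh
  · rw [sinh_mul_I]
    exact mul_ne_zero hsin I_ne_zero

theorem sum_waveNumber_mul_coth (np nm : ℕ) (s : ℂ) :
    ∑ j, waveNumber np nm s j * (cosh (waveNumber np nm s j) / sinh (waveNumber np nm s j)) =
      s * (nm * (cos s / sin s) + np * (cosh s / sinh s)) := by
  have mul_I_coth : s * I * (cos s / (sin s * I)) = s * (cos s / sin s) := by
    field_simp [I_ne_zero]
  simp only [Fin.sum_univ_add, waveNumber, Fin.val_castAdd, Fin.is_lt, if_true, Fin.val_natAdd,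
    Nat.not_lt.2 (Nat.le_add_right _ _), if_false, cosh_mul_I, sinh_mul_I, mul_I_coth,
    Finset.sum_const, Finset.card_univ, Fintype.card_fin, nsmul_eq_mul]
  ring

theorem inEigenspaceB_neg_sq_iff {s : ℝ} {f : Fin (np + nm) → ℝ → ℂ} :
    InEigenspaceB np nm (-s ^ 2) f ↔ IsStarSolution (waveNumber np nm s) f := by
  have ode_iff : (∀ j x, deriv (deriv (f j)) x = waveNumber np nm s j ^ 2 * f j x) ↔
      (∀ j : Fin (np + nm), (j : ℕ) < np →
        ∀ x : ℝ, deriv (deriv (f j)) x = -((-s ^ 2 : ℝ) : ℂ) * f j x) ∧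
      ∀ j : Fin (np + nm), np ≤ (j : ℕ) →
        ∀ x : ℝ, deriv (deriv (f j)) x = ((-s ^ 2 : ℝ) : ℂ) * f j x := by
    rw [← forall_and]
    refine forall_congr' fun j ↦ ?_
    rcases lt_or_ge (j : ℕ) np with hj | hj
    · simp [waveNumber_sq, hj, hj.not_ge]
    · simp [waveNumber_sq, hj, hj.not_gt]
  constructor
  · rintro ⟨contDiff, ode_pos, ode_neg, dirichlet, continuity, kirchhoff⟩
    exact ⟨contDiff, ode_iff.2 ⟨ode_pos, ode_neg⟩, dirichlet, continuity, kirchhoff⟩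
  · rintro ⟨contDiff, ode, dirichlet, continuity, kirchhoff⟩
    exact ⟨contDiff, (ode_iff.1 ode).1, (ode_iff.1 ode).2, dirichlet, continuity, kirchhoff⟩

end Indefinite

/-- For `λ < 0` with `sin √(−λ) ≠ 0`: if `n₋ cot √(−λ) + n₊ coth √(−λ) = 0` then
`dim E_B(λ) = 1`, and otherwise `E_B(λ) = {0}`. -/
theorem stmt_12 (np nm : ℕ) (hp : 1 ≤ np) (hm : 1 ≤ nm) (lam : ℝ) (hlam : lam < 0)
    (hsin : Real.sin (Real.sqrt (-lam)) ≠ 0) :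
    ((nm : ℝ) * (Real.cos (Real.sqrt (-lam)) / Real.sin (Real.sqrt (-lam)))
        + (np : ℝ) * (Real.cosh (Real.sqrt (-lam)) / Real.sinh (Real.sqrt (-lam))) = 0 →
      ∃ f : Fin (np + nm) → ℝ → ℂ, InEigenspaceB np nm lam f ∧ f ≠ 0 ∧
        ∀ g : Fin (np + nm) → ℝ → ℂ, InEigenspaceB np nm lam g → ∃ c : ℂ, g = c • f) ∧
    ((nm : ℝ) * (Real.cos (Real.sqrt (-lam)) / Real.sin (Real.sqrt (-lam)))
        + (np : ℝ) * (Real.cosh (Real.sqrt (-lam)) / Real.sinh (Real.sqrt (-lam))) ≠ 0 →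
      ∀ f : Fin (np + nm) → ℝ → ℂ, InEigenspaceB np nm lam f → f = 0) := by
  obtain ⟨s, hs, rfl⟩ : ∃ s : ℝ, 0 < s ∧ lam = -s ^ 2 :=
    ⟨√(-lam), Real.sqrt_pos.2 (neg_pos.2 hlam), by rw [Real.sq_sqrt (neg_pos.2 hlam).le, neg_neg]⟩
  rw [neg_neg, Real.sqrt_sq hs.le] at hsin ⊢
  simp only [inEigenspaceB_neg_sq_iff]
  have hsinh (j) : sinh (waveNumber np nm s j) ≠ 0 :=
    sinh_waveNumber_ne_zero (mod_cast (Real.sinh_pos_iff.2 hs).ne') (mod_cast hsin) j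
  have hsum := sum_waveNumber_mul_coth np nm s
  constructor
  · intro hzero
    have central_eq_one (j) : edgeProfile (waveNumber np nm s j) 0 = 1 := edgeProfile_zero (hsinh j)
    let i : Fin (np + nm) := ⟨0, by omega⟩
    refine ⟨fun j ↦ edgeProfile (waveNumber np nm s j), isStarSolution_edgeProfile hsinh ?_,
      fun heq ↦ ?_, fun g hg ↦ ⟨g i 0, hg.eq_smul_edgeProfile hsinh i⟩⟩
    · rw [hsum]
      exact mul_eq_zero_of_right _ (mod_cast hzero)
    · exact one_ne_zero ((central_eq_one i).symm.trans (congrFun (congrFun heq i) 0))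
  · intro hne f hf
    refine hf.eq_zero hsinh ?_
    rw [hsum]
    exact mul_ne_zero (mod_cast hs.ne') (mod_cast hne)
end

section
/- Fix integers n₊ ≥ 1 and n₋ ≥ 1, and for each integer k ≥ 1 let μ_k denote the unique solution of n₊·cot μ + n₋·coth μ = 0 in the interval ((k−1)π, kπ). Then μ_k − ( kπ − arctan(n₊/n₋) ) → 0 as k → ∞; equivalently, the positive eigenvalues η_k = μ_k² of the indefinite Kirchhoff Laplacian satisfy η_k = ( kπ − arctan(n₊/n₋) )² + o(k) asymptotically in the sense that √η_k − kπ + arctan(n₊/n₋) → 0. -/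
open Filter

/-!
On each interval `((k - 1)π, kπ)` the cotangent is inverted explicitly by
`x = kπ - π/2 - arctan (cot x)`. The equation gives `cot μ_k = -(n₋/n₊) coth μ_k`, and
`coth μ_k → 1` because `μ_k → ∞`; so continuity of `arctan` yields
`μ_k - kπ → -(π/2 - arctan (n₋/n₊)) = -arctan (n₊/n₋)`.
-/

section

open Real Set Topology

theorem arctan_cot_of_mem_Ioo {x : ℝ} (hx : x ∈ Ioo 0 π) : arctan (cot x) = π / 2 - x := by
  rw [← tan_inv_eq_cot, ← tan_pi_div_two_sub]
  exact arctan_tan (by linarith [hx.2]) (by linarith [hx.1])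

theorem cot_sub_int_mul_pi (x : ℝ) (n : ℤ) : cot (x - n * π) = cot x := by
  rw [← tan_inv_eq_cot, tan_sub_int_mul_pi, tan_inv_eq_cot]

theorem arctan_cot_of_mem_Ioo_int_mul_pi {x : ℝ} {n : ℤ}
    (hx : x ∈ Ioo ((n - 1) * π) (n * π)) : arctan (cot x) = n * π - π / 2 - x := by
  have hshift : x - (n - 1 : ℤ) * π ∈ Ioo 0 π := by
    push_cast
    constructor <;> linarith [hx.1, hx.2]
  calc arctan (cot x) = arctan (cot (x - (n - 1 : ℤ) * π)) := by rw [cot_sub_int_mul_pi]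
    _ = π / 2 - (x - (n - 1 : ℤ) * π) := arctan_cot_of_mem_Ioo hshift
    _ = n * π - π / 2 - x := by push_cast; ring

theorem tendsto_sub_int_mul_pi_of_tendsto_cot {ι : Type*} {l : Filter ι} {x : ι → ℝ} {n : ι → ℤ}
    {c : ℝ} (hx : ∀ᶠ i in l, x i ∈ Ioo ((n i - 1) * π) (n i * π))
    (hc : Tendsto (fun i => cot (x i)) l (𝓝 c)) :
    Tendsto (fun i => x i - n i * π) l (𝓝 (-(π / 2) - arctan c)) := by
  have harctan : Tendsto (fun i => -(π / 2) - arctan (cot (x i))) l (𝓝 (-(π / 2) - arctan c)) :=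
    ((continuous_arctan.tendsto c).comp hc).const_sub _
  refine harctan.congr' ?_
  filter_upwards [hx] with i hi
  rw [arctan_cot_of_mem_Ioo_int_mul_pi hi]
  ring

theorem tanh_eq_exp_neg_two_mul (x : ℝ) :
    tanh x = (1 - exp (-(2 * x))) / (1 + exp (-(2 * x))) := by
  have hexp : exp (-(2 * x)) = exp (-x) / exp x := by rw [← exp_sub]; ring_nf
  rw [tanh_eq, hexp]
  field_simp

theorem tendsto_tanh_atTop : Tendsto tanh atTop (𝓝 1) := by
  have hexp : Tendsto (fun x : ℝ => exp (-(2 * x))) atTop (𝓝 0) :=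
    tendsto_exp_neg_atTop_nhds_zero.comp (tendsto_id.const_mul_atTop two_pos)
  have hquot := (hexp.const_sub 1).div (hexp.const_add 1) (by norm_num)
  rw [sub_zero, add_zero, div_one] at hquot
  exact hquot.congr fun x => (tanh_eq_exp_neg_two_mul x).symm

theorem tendsto_cosh_div_sinh_atTop : Tendsto (fun x : ℝ => cosh x / sinh x) atTop (𝓝 1) := by
  simpa only [tanh_eq_sinh_div_cosh, inv_div, inv_one] using
    tendsto_tanh_atTop.inv₀ one_ne_zero

theorem tendsto_atTop_of_eventually_natCast_sub_mul_le {u : ℕ → ℝ} {c d : ℝ} (hc : 0 < c)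
    (hu : ∀ᶠ k : ℕ in atTop, ((k : ℝ) - d) * c ≤ u k) : Tendsto u atTop atTop := by
  have hlower : Tendsto (fun k : ℕ => ((k : ℝ) - d) * c) atTop atTop :=
    (tendsto_atTop_add_const_right _ (-d) tendsto_natCast_atTop_atTop).atTop_mul_const hc
  exact tendsto_atTop_mono' _ hu hlower

theorem tendsto_cot_of_mul_cot_add_mul_coth_eq_zero {ι : Type*} {l : Filter ι} {a b : ℝ}
    (ha : a ≠ 0) {x : ι → ℝ} (hx : Tendsto x l atTop)
    (heq : ∀ᶠ i in l, a * (cos (x i) / sin (x i)) + b * (cosh (x i) / sinh (x i)) = 0) :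
    Tendsto (fun i => cot (x i)) l (𝓝 (-(b / a))) := by
  have hcoth : Tendsto (fun i => -(b / a) * (cosh (x i) / sinh (x i))) l (𝓝 (-(b / a))) := by
    simpa only [mul_one, Function.comp_def] using
      (tendsto_cosh_div_sinh_atTop.comp hx).const_mul (-(b / a))
  refine hcoth.congr' ?_
  filter_upwards [heq] with i hi
  rw [cot_eq_cos_div_sin, neg_mul, div_mul_eq_mul_div, ← neg_div, div_eq_iff ha]
  linarith

-- For weights of arbitrary sign the limiting phase is `arccot (b / a) ∈ (0, π)`, which is
-- `arctan (a / b)` only when `a / b > 0`.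
theorem stmt_14_general {a b : ℝ} (ha : a ≠ 0) {μ : ℕ → ℝ}
    (hμmem : ∀ᶠ k : ℕ in atTop, μ k ∈ Ioo (((k : ℝ) - 1) * π) (k * π))
    (hμeq : ∀ᶠ k : ℕ in atTop,
      a * (cos (μ k) / sin (μ k)) + b * (cosh (μ k) / sinh (μ k)) = 0) :
    Tendsto (fun k : ℕ => μ k - (k * π - (π / 2 - arctan (b / a)))) atTop (𝓝 0) := by
  have hμtop : Tendsto μ atTop atTop :=
    tendsto_atTop_of_eventually_natCast_sub_mul_le pi_pos (hμmem.mono fun k hk => hk.1.le)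
  have hcot : Tendsto (fun k => cot (μ k)) atTop (𝓝 (-(b / a))) :=
    tendsto_cot_of_mul_cot_add_mul_coth_eq_zero ha hμtop hμeq
  have hphase : Tendsto (fun k : ℕ => μ k - k * π) atTop (𝓝 (-(π / 2) - arctan (-(b / a)))) := by
    simpa only [Int.cast_natCast] using
      tendsto_sub_int_mul_pi_of_tendsto_cot (n := fun k : ℕ => (k : ℤ))
        (by simpa only [Int.cast_natCast] using hμmem) hcot
  rw [arctan_neg] at hphase
  convert hphase.add_const (π / 2 - arctan (b / a)) using 2 <;> ring

end

/-- Asymptotics of the positive eigenvalues: if `μ_k` is the solution of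
`n₊ cot μ + n₋ coth μ = 0` in `((k−1)π, kπ)`, then
`μ_k − (kπ − arctan(n₊/n₋)) → 0` as `k → ∞`. -/
theorem stmt_14 (np nm : ℕ) (hp : 1 ≤ np) (hm : 1 ≤ nm) (μ : ℕ → ℝ)
    (hμmem : ∀ k : ℕ, 1 ≤ k →
      μ k ∈ Set.Ioo (((k : ℝ) - 1) * Real.pi) ((k : ℝ) * Real.pi))
    (hμeq : ∀ k : ℕ, 1 ≤ k →
      (np : ℝ) * (Real.cos (μ k) / Real.sin (μ k))
        + (nm : ℝ) * (Real.cosh (μ k) / Real.sinh (μ k)) = 0) :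
    Tendsto (fun k : ℕ => μ k - ((k : ℝ) * Real.pi - Real.arctan ((np : ℝ) / (nm : ℝ))))
      atTop (nhds 0) := by
  have hratio : (0 : ℝ) < nm / np := by positivity
  rw [← inv_div (nm : ℝ) np, Real.arctan_inv_of_pos hratio]
  exact stmt_14_general (Nat.cast_ne_zero.mpr (Nat.one_le_iff_ne_zero.mp hp))
    ((eventually_ge_atTop 1).mono hμmem) ((eventually_ge_atTop 1).mono hμeq)
end

section
/- Fix integers n₊ ≥ 1 and n₋ ≥ 1. Let μ be the unique solution in (0, π) of n₊·cot μ + n₋·coth μ = 0 and let ν be the unique solution in (0, π) of n₋·cot ν + n₊·coth ν = 0. Then μ = ν if and only if n₊ = n₋. (Consequently the point spectrum of the indefinite Kirchhoff Laplacian B is symmetric with respect to the origin if and only if n₊ = n₋.) -/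
/-!
Both `cot` on `(0, π)` and `coth` on `(0, ∞)` are strictly decreasing, so `cot + coth` vanishes at
most once on `(0, π)`. When the two weights agree, both equations say `cot + coth = 0`, hence
`μ = ν`. Conversely, at a common solution the sum of the two equations gives `cot + coth = 0`, and
substituting `cot = -coth` into either of them forces the weights to agree because `coth ≠ 0`.
-/

open Set Real

theorem strictAntiOn_cos_div_sin : StrictAntiOn (fun x : ℝ ↦ cos x / sin x) (Ioo 0 π) := by
  intro x hx y hy hxy
  have hsin_sub : 0 < sin (y - x) :=
    sin_pos_of_pos_of_lt_pi (sub_pos.2 hxy) (by linarith [hx.1, hy.2])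
  rw [sin_sub] at hsin_sub
  rw [div_lt_div_iff₀ (sin_pos_of_mem_Ioo hy) (sin_pos_of_mem_Ioo hx)]
  linarith

theorem strictAntiOn_cosh_div_sinh : StrictAntiOn (fun x : ℝ ↦ cosh x / sinh x) (Ioi 0) := by
  intro x hx y hy hxy
  have hsinh_sub : 0 < sinh (y - x) := sinh_pos_iff.2 (sub_pos.2 hxy)
  rw [sinh_sub] at hsinh_sub
  rw [div_lt_div_iff₀ (sinh_pos_iff.2 hy) (sinh_pos_iff.2 hx)]
  linarith

theorem strictAntiOn_cos_div_sin_add_cosh_div_sinh :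
    StrictAntiOn (fun x : ℝ ↦ cos x / sin x + cosh x / sinh x) (Ioo 0 π) :=
  strictAntiOn_cos_div_sin.add (strictAntiOn_cosh_div_sinh.mono Ioo_subset_Ioi_self)

theorem cosh_div_sinh_ne_zero {x : ℝ} (hx : x ≠ 0) : cosh x / sinh x ≠ 0 :=
  div_ne_zero (cosh_pos x).ne' (sinh_ne_zero.2 hx)

theorem eq_of_mul_add_mul_eq_zero_of_swap {R : Type*} [CommRing R] [NoZeroDivisors R]
    {a b c d : R} (hab : a + b ≠ 0) (hd : d ≠ 0)
    (h : a * c + b * d = 0) (h_swap : b * c + a * d = 0) : a = b := by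
  have hsum : (a + b) * (c + d) = 0 := by linear_combination h + h_swap
  have hcd : c + d = 0 := (mul_eq_zero.1 hsum).resolve_left hab
  have hdiff : (a - b) * d = 0 := by linear_combination a * hcd - h
  exact sub_eq_zero.1 ((mul_eq_zero.1 hdiff).resolve_right hd)

theorem stmt_16_general {a b μ ν : ℝ} (hab : a + b ≠ 0) (hμ : μ ∈ Ioo 0 π)
    (hμeq : a * (cos μ / sin μ) + b * (cosh μ / sinh μ) = 0) (hν : ν ∈ Ioo 0 π)
    (hνeq : b * (cos ν / sin ν) + a * (cosh ν / sinh ν) = 0) :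
    μ = ν ↔ a = b := by
  constructor
  · rintro rfl
    exact eq_of_mul_add_mul_eq_zero_of_swap hab (cosh_div_sinh_ne_zero hμ.1.ne') hμeq hνeq
  · rintro rfl
    have ha : a ≠ 0 := by
      rintro rfl
      exact hab (add_zero 0)
    rw [← mul_add] at hμeq hνeq
    have hμ_root := (mul_eq_zero.1 hμeq).resolve_left ha
    have hν_root := (mul_eq_zero.1 hνeq).resolve_left ha
    exact strictAntiOn_cos_div_sin_add_cosh_div_sinh.injOn hμ hν
      (hμ_root.trans hν_root.symm)

/-- Let `μ` be the solution in `(0, π)` of `n₊ cot μ + n₋ coth μ = 0` and `ν` the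
solution in `(0, π)` of `n₋ cot ν + n₊ coth ν = 0`. Then `μ = ν` iff `n₊ = n₋`
(symmetry of the spectrum of the indefinite Kirchhoff Laplacian with respect to the
origin iff `n₊ = n₋`). -/
theorem stmt_16 (np nm : ℕ) (hp : 1 ≤ np) (hm : 1 ≤ nm) (μ ν : ℝ)
    (hμ : μ ∈ Set.Ioo 0 Real.pi)
    (hμeq : (np : ℝ) * (Real.cos μ / Real.sin μ)
      + (nm : ℝ) * (Real.cosh μ / Real.sinh μ) = 0)
    (hν : ν ∈ Set.Ioo 0 Real.pi)
    (hνeq : (nm : ℝ) * (Real.cos ν / Real.sin ν)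
      + (np : ℝ) * (Real.cosh ν / Real.sinh ν) = 0) :
    μ = ν ↔ np = nm := by
  have hsum : (np : ℝ) + nm ≠ 0 := by exact_mod_cast (by lia : np + nm ≠ 0)
  exact (stmt_16_general hsum hμ hμeq hν hνeq).trans Nat.cast_inj
end

section
/- Fix an integer n ≥ 1 and let H = ⊕_{j=1}^n L²((0,1), ℂ) with the standard inner product ⟨f, g⟩ = ∑_j ∫₀¹ f_j·conj(g_j). For every δ ∈ (0, 1/2) there exists a bounded linear operator X : H → H which is bijective with bounded inverse and satisfies ⟨Xf, f⟩ ≥ ‖f‖² for all f ∈ H (in particular X is positive), such that: (i) for every f ∈ H and every j, (Xf)_j(x) = f_j(x) for almost every x ∈ (1−δ, 1); and (ii) for every f ∈ H and every j, if f_j agrees almost everywhere with a continuous function on [0,1], then (Xf)_j agrees almost everywhere with a continuous function on [0,1] whose value at 0 is 0. -/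
open MeasureTheory

/-- Lebesgue measure on the unit interval `(0,1)`, the edge measure of the star graph. -/
noncomputable abbrev edgeMeasure : Measure ℝ := volume.restrict (Set.Ioo 0 1)

/-- The Hilbert space `H = ⊕_{j=1}^n L²((0,1), ℂ)` of a star graph with `n` edges. -/
noncomputable abbrev GraphL2 (n : ℕ) := PiLp 2 (fun _ : Fin n => Lp ℂ 2 edgeMeasure)

/-!
On each edge let `D f = f (· / 2)`, whose adjoint is `D* f = 2 f (2 ·)` with `f` extended by zero,
let `ψ` be a continuous cutoff with `ψ 0 = 1` that vanishes on `[1 - δ, ∞)`, and put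
`Y = (3 - 2 D*) ψ`. The operator `X` is the direct sum over the edges of `1 + Y*Y`, which is
coercive and hence invertible. As `Y*` ends with a multiplication by the conjugate of `ψ`, `X` is
the identity on `(1 - δ, 1)`. Both `D` and `D* ψ` preserve continuity, the latter because `ψ f`
vanishes on `[1, ∞)`. On values at `0`, `D` acts as `1` and `D*` as `2`, so the coefficients `3`
and `2` give `(X f) 0 = (1 + (3 - 2)(3 - 4)) (f 0) = 0`.
-/

open scoped ENNReal InnerProduct InnerProductSpace

section OneAddAdjointCompSelf

variable {𝕜 E F : Type*} [RCLike 𝕜] [NormedAddCommGroup E] [InnerProductSpace 𝕜 E]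
  [CompleteSpace E] [NormedAddCommGroup F] [InnerProductSpace 𝕜 F] [CompleteSpace F]

theorem inner_one_add_adjoint_comp_self (T : E →L[𝕜] F) (x : E) :
    ⟪(1 + T† ∘L T) x, x⟫_𝕜 = ((‖x‖ ^ 2 + ‖T x‖ ^ 2 : ℝ) : 𝕜) := by
  rw [add_apply, one_apply_eq_self,
    ContinuousLinearMap.comp_apply, inner_add_left, ContinuousLinearMap.adjoint_inner_left,
    inner_self_eq_norm_sq_to_K, inner_self_eq_norm_sq_to_K]
  push_cast
  rfl

theorem isUnit_one_add_adjoint_comp_self (T : E →L[𝕜] F) : IsUnit (1 + T† ∘L T) := by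
  refine ContinuousLinearMap.isUnit_of_forall_le_norm_inner_map _ one_pos fun x => ?_
  rw [inner_one_add_adjoint_comp_self, RCLike.norm_of_nonneg (by positivity), NNReal.coe_one,
    mul_one]
  exact le_add_of_nonneg_right (sq_nonneg _)

/-- The positive operator `1 + T*T` on a Hilbert space, bundled with its bounded inverse. -/
noncomputable def oneAddAdjointCompSelf (T : E →L[𝕜] F) : E ≃L[𝕜] E :=
  ContinuousLinearEquiv.unitsEquiv 𝕜 E (isUnit_one_add_adjoint_comp_self T).unit

theorem oneAddAdjointCompSelf_apply (T : E →L[𝕜] F) (x : E) :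
    oneAddAdjointCompSelf T x = x + (T†) (T x) :=
  rfl

theorem norm_sq_le_re_inner_oneAddAdjointCompSelf (T : E →L[𝕜] F) (x : E) :
    ‖x‖ ^ 2 ≤ RCLike.re ⟪oneAddAdjointCompSelf T x, x⟫_𝕜 ∧
      RCLike.im ⟪oneAddAdjointCompSelf T x, x⟫_𝕜 = 0 := by
  have h : ⟪oneAddAdjointCompSelf T x, x⟫_𝕜 = ((‖x‖ ^ 2 + ‖T x‖ ^ 2 : ℝ) : 𝕜) :=
    inner_one_add_adjoint_comp_self T x
  rw [h, RCLike.ofReal_re, RCLike.ofReal_im]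
  exact ⟨le_add_of_nonneg_right (sq_nonneg _), rfl⟩

end OneAddAdjointCompSelf

section DirectSum

/-- The `ℓᵖ` direct sum of finitely many continuous linear equivalences. -/
noncomputable def piLpCongrRight {𝕜 ι : Type*} [Semiring 𝕜] (p : ℝ≥0∞) [Fintype ι]
    {E F : ι → Type*}
    [∀ i, SeminormedAddCommGroup (E i)] [∀ i, Module 𝕜 (E i)]
    [∀ i, SeminormedAddCommGroup (F i)] [∀ i, Module 𝕜 (F i)]
    (e : ∀ i, E i ≃L[𝕜] F i) : PiLp p E ≃L[𝕜] PiLp p F :=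
  (PiLp.continuousLinearEquiv p 𝕜 E).trans
    ((ContinuousLinearEquiv.piCongrRight e).trans (PiLp.continuousLinearEquiv p 𝕜 F).symm)

theorem norm_sq_le_re_inner_piLpCongrRight {𝕜 ι : Type*} [RCLike 𝕜] [Fintype ι]
    {E : ι → Type*} [∀ i, NormedAddCommGroup (E i)] [∀ i, InnerProductSpace 𝕜 (E i)]
    (e : ∀ i, E i ≃L[𝕜] E i)
    (he : ∀ i x, ‖x‖ ^ 2 ≤ RCLike.re ⟪e i x, x⟫_𝕜 ∧ RCLike.im ⟪e i x, x⟫_𝕜 = 0) (f : PiLp 2 E) :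
    ‖f‖ ^ 2 ≤ RCLike.re ⟪piLpCongrRight 2 e f, f⟫_𝕜 ∧
      RCLike.im ⟪piLpCongrRight 2 e f, f⟫_𝕜 = 0 := by
  have hinner : ⟪piLpCongrRight 2 e f, f⟫_𝕜 = ∑ i, ⟪e i (f i), f i⟫_𝕜 :=
    PiLp.inner_apply _ _
  rw [hinner, PiLp.norm_sq_eq_of_L2, map_sum, map_sum]
  exact ⟨Finset.sum_le_sum fun i _ => (he i (f i)).1,
    Finset.sum_eq_zero fun i _ => (he i (f i)).2⟩

end DirectSum

section Composition

variable {α β E : Type*} [MeasurableSpace α] [MeasurableSpace β] [NormedAddCommGroup E]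
  {μ : Measure α} {ν : Measure β} {φ : α → β} {c p : ℝ≥0∞}

theorem memLp_comp_of_map_le_smul (hφ : Measurable φ) (hc : c ≠ ∞) (h : μ.map φ ≤ c • ν)
    {f : β → E} (hf : MemLp f p ν) : MemLp (f ∘ φ) p μ :=
  (hf.of_measure_le_smul hc h).comp_of_map hφ.aemeasurable

theorem quasiMeasurePreserving_of_map_le_smul (hφ : Measurable φ) (h : μ.map φ ≤ c • ν) :
    Measure.QuasiMeasurePreserving φ μ ν :=
  ⟨hφ, Measure.absolutelyContinuous_of_le_smul h⟩

theorem eLpNorm_comp_le_of_map_le_smul (hφ : Measurable φ) (h : μ.map φ ≤ c • ν)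
    {f : β → E} (hf : AEStronglyMeasurable f ν) :
    eLpNorm (f ∘ φ) p μ ≤ c ^ (1 / p).toReal * eLpNorm f p ν := by
  have hf' : AEStronglyMeasurable f (μ.map φ) :=
    hf.mono_ac (Measure.absolutelyContinuous_of_le_smul h)
  rw [← eLpNorm_map_measure hf' hφ.aemeasurable]
  exact eLpNorm_le_of_measure_le_smul h

variable (𝕜 : Type*) [NontriviallyNormedField 𝕜] [NormedSpace 𝕜 E]

/-- The composition operator `f ↦ f ∘ φ` from `Lᵖ(ν)` to `Lᵖ(μ)`, bounded as soon as the
pushforward of `μ` under `φ` is dominated by a finite multiple of `ν`. -/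
noncomputable def lpComp [Fact (1 ≤ p)] (hφ : Measurable φ) (hc : c ≠ ∞)
    (h : μ.map φ ≤ c • ν) : Lp E p ν →L[𝕜] Lp E p μ :=
  LinearMap.mkContinuous
    { toFun f := (memLp_comp_of_map_le_smul hφ hc h (Lp.memLp f)).toLp
      map_add' f g := by
        rw [← MemLp.toLp_add]
        exact MemLp.toLp_congr _ _
          ((quasiMeasurePreserving_of_map_le_smul hφ h).ae_eq_comp (Lp.coeFn_add f g))
      map_smul' a f := by
        rw [RingHom.id_apply, ← MemLp.toLp_const_smul]
        exact MemLp.toLp_congr _ _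
          ((quasiMeasurePreserving_of_map_le_smul hφ h).ae_eq_comp (Lp.coeFn_smul a f)) }
    (c ^ (1 / p).toReal).toReal fun f => by
      have hfin : c ^ (1 / p).toReal ≠ ∞ := ENNReal.rpow_ne_top_of_nonneg (by positivity) hc
      rw [LinearMap.coe_mk, AddHom.coe_mk, Lp.norm_toLp, Lp.norm_def, ← ENNReal.toReal_mul]
      exact ENNReal.toReal_mono (ENNReal.mul_ne_top hfin (Lp.eLpNorm_ne_top f))
        (eLpNorm_comp_le_of_map_le_smul hφ h (Lp.aestronglyMeasurable f))

theorem coeFn_lpComp [Fact (1 ≤ p)] (hφ : Measurable φ) (hc : c ≠ ∞) (h : μ.map φ ≤ c • ν)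
    (f : Lp E p ν) : lpComp 𝕜 hφ hc h f =ᵐ[μ] f ∘ φ :=
  (memLp_comp_of_map_le_smul hφ hc h (Lp.memLp f)).coeFn_toLp

end Composition

section Multiplication

variable {α 𝕜 E : Type*} [MeasurableSpace α] {μ : Measure α} [NormedAddCommGroup E]

/-- Multiplication by an essentially bounded function `ψ`, as an operator on `Lᵖ(μ)`. -/
noncomputable def lpMul [NontriviallyNormedField 𝕜] [NormedSpace 𝕜 E] (p : ℝ≥0∞) [Fact (1 ≤ p)]
    {ψ : α → 𝕜} (hψ : MemLp ψ ∞ μ) : Lp E p μ →L[𝕜] Lp E p μ :=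
  (ContinuousLinearMap.lsmul 𝕜 𝕜).holderL μ ∞ p p hψ.toLp

theorem coeFn_lpMul [NontriviallyNormedField 𝕜] [NormedSpace 𝕜 E] {p : ℝ≥0∞} [Fact (1 ≤ p)]
    {ψ : α → 𝕜} (hψ : MemLp ψ ∞ μ) (f : Lp E p μ) : lpMul p hψ f =ᵐ[μ] fun x => ψ x • f x := by
  have hmul := (ContinuousLinearMap.lsmul 𝕜 𝕜).coeFn_holder (r := p) hψ.toLp f
  filter_upwards [hmul, hψ.coeFn_toLp] with x hx hψx
  exact hx.trans (by rw [hψx, ContinuousLinearMap.lsmul_apply])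

theorem adjoint_lpMul [RCLike 𝕜] [InnerProductSpace 𝕜 E] [CompleteSpace E] {ψ : α → 𝕜}
    (hψ : MemLp ψ ∞ μ) :
    (lpMul 2 hψ : Lp E 2 μ →L[𝕜] Lp E 2 μ)† = lpMul 2 hψ.star := by
  refine ((ContinuousLinearMap.eq_adjoint_iff _ _).2 fun f g => ?_).symm
  rw [L2.inner_def, L2.inner_def]
  refine integral_congr_ae ?_
  filter_upwards [coeFn_lpMul hψ.star f, coeFn_lpMul hψ g] with x hf hg
  rw [hf, hg, inner_smul_left, inner_smul_right, Pi.star_apply, starRingEnd_apply, star_star]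

end Multiplication

section Dilation

variable {s : Set ℝ} {r : ℝ}

theorem map_volume_div (hr : r ≠ 0) : volume.map (· / r) = ENNReal.ofReal |r| • volume := by
  simpa only [div_eq_mul_inv, inv_inv] using Real.map_volume_mul_right (inv_ne_zero hr)

theorem map_mul_left_restrict_le (hs : MeasurableSet s) (hr : 0 < r)
    (hrs : Set.MapsTo (r * ·) s s) :
    (volume.restrict s).map (r * ·) ≤ ENNReal.ofReal r⁻¹ • volume.restrict s := calc
  (volume.restrict s).map (r * ·)
      ≤ (volume.restrict ((r * ·) ⁻¹' s)).map (r * ·) :=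
        Measure.map_mono (Measure.restrict_mono hrs le_rfl) (measurable_const_mul r)
  _ = ENNReal.ofReal r⁻¹ • volume.restrict s := by
        rw [← Measure.restrict_map (measurable_const_mul r) hs, Real.map_volume_mul_left hr.ne',
          abs_of_pos (inv_pos.2 hr), Measure.restrict_smul]

variable {𝕜 E : Type*} [NormedAddCommGroup E] {p : ℝ≥0∞}

theorem memLp_indicator_comp_div {f : ℝ → E} (hs : MeasurableSet s) (hr : r ≠ 0)
    (hf : MemLp f p (volume.restrict s)) : MemLp (fun x => s.indicator f (x / r)) p volume := by
  have hind : MemLp (s.indicator f) p volume := (memLp_indicator_iff_restrict hs).2 hf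
  exact memLp_comp_of_map_le_smul (measurable_id.div_const r) ENNReal.ofReal_ne_top
    (map_volume_div hr).le hind

section NormedSpace

variable [NontriviallyNormedField 𝕜] [NormedSpace 𝕜 E] [Fact (1 ≤ p)]

variable (𝕜 E p) in
/-- The dilation operator `f ↦ f (r ·)` on `Lᵖ(s)`, for a set `s ⊆ ℝ` that is mapped into itself
by `x ↦ r x`. -/
noncomputable def dilation (hs : MeasurableSet s) (hr : 0 < r) (hrs : Set.MapsTo (r * ·) s s) :
    Lp E p (volume.restrict s) →L[𝕜] Lp E p (volume.restrict s) :=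
  lpComp 𝕜 (measurable_const_mul r) ENNReal.ofReal_ne_top (map_mul_left_restrict_le hs hr hrs)

theorem coeFn_dilation (hs : MeasurableSet s) (hr : 0 < r) (hrs : Set.MapsTo (r * ·) s s)
    (f : Lp E p (volume.restrict s)) :
    dilation 𝕜 E p hs hr hrs f =ᵐ[volume.restrict s] fun x => f (r * x) :=
  coeFn_lpComp 𝕜 _ _ _ f

theorem coeFn_dilation_of_ae_eq (hs : MeasurableSet s) (hr : 0 < r)
    (hrs : Set.MapsTo (r * ·) s s) {f : Lp E p (volume.restrict s)} {g : ℝ → E}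
    (hfg : f =ᵐ[volume.restrict s] g) :
    dilation 𝕜 E p hs hr hrs f =ᵐ[volume.restrict s] fun x => g (r * x) :=
  (coeFn_dilation hs hr hrs f).trans
    ((quasiMeasurePreserving_of_map_le_smul (measurable_const_mul r)
      (map_mul_left_restrict_le hs hr hrs)).ae_eq_comp hfg)

end NormedSpace

variable [RCLike 𝕜] [InnerProductSpace 𝕜 E]

theorem setIntegral_inner_comp_mul_left (hs : MeasurableSet s) (hr : 0 < r)
    (hrs : Set.MapsTo (r * ·) s s) (f g : ℝ → E) :
    ∫ x in s, ⟪f (r * x), g x⟫_𝕜 = ∫ x in s, ⟪f x, (r⁻¹ : 𝕜) • s.indicator g (x / r)⟫_𝕜 := by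
  set G : ℝ → 𝕜 := fun y => ⟪f y, s.indicator g (y / r)⟫_𝕜 with hG
  have hG_dilate (x : ℝ) : G (r * x) = ⟪f (r * x), s.indicator g x⟫_𝕜 := by
    simp only [hG, mul_div_cancel_left₀ x hr.ne']
  have hG_zero (y : ℝ) (hy : y ∉ s) : G y = 0 := by
    have : y / r ∉ s := fun h => hy (by simpa [mul_div_cancel₀ y hr.ne'] using hrs h)
    simp only [hG, Set.indicator_of_notMem this, inner_zero_right]
  calc ∫ x in s, ⟪f (r * x), g x⟫_𝕜
      = ∫ x in s, G (r * x) := setIntegral_congr_fun hs fun x hx => by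
        rw [hG_dilate, Set.indicator_of_mem hx]
    _ = ∫ x, G (r * x) := setIntegral_eq_integral_of_forall_compl_eq_zero fun x hx => by
        rw [hG_dilate, Set.indicator_of_notMem hx, inner_zero_right]
    _ = r⁻¹ • ∫ y, G y := by
        rw [Measure.integral_comp_mul_left, abs_of_pos (inv_pos.2 hr)]
    _ = r⁻¹ • ∫ y in s, G y := by
        rw [setIntegral_eq_integral_of_forall_compl_eq_zero hG_zero]
    _ = ∫ x in s, ⟪f x, (r⁻¹ : 𝕜) • s.indicator g (x / r)⟫_𝕜 := by
        simp only [hG, inner_smul_right, integral_const_mul, RCLike.real_smul_eq_coe_mul,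
          RCLike.ofReal_inv]

variable [CompleteSpace E]

theorem coeFn_adjoint_dilation (hs : MeasurableSet s) (hr : 0 < r)
    (hrs : Set.MapsTo (r * ·) s s) (f : Lp E 2 (volume.restrict s)) :
    ((dilation 𝕜 E 2 hs hr hrs)†) f =ᵐ[volume.restrict s]
      fun x => (r⁻¹ : 𝕜) • s.indicator f (x / r) := by
  have hmem : MemLp (fun x => (r⁻¹ : 𝕜) • s.indicator f (x / r)) 2 (volume.restrict s) :=
    ((memLp_indicator_comp_div hs hr.ne' (Lp.memLp f)).restrict s).const_smul _
  suffices h : ((dilation 𝕜 E 2 hs hr hrs)†) f = hmem.toLp from h ▸ hmem.coeFn_toLp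
  refine ext_inner_left 𝕜 fun v => ?_
  rw [ContinuousLinearMap.adjoint_inner_right, L2.inner_def, L2.inner_def]
  calc ∫ x in s, ⟪dilation 𝕜 E 2 hs hr hrs v x, f x⟫_𝕜
      = ∫ x in s, ⟪v (r * x), f x⟫_𝕜 := integral_congr_ae <| by
        filter_upwards [coeFn_dilation (𝕜 := 𝕜) hs hr hrs v] with x hx
        rw [hx]
    _ = ∫ x in s, ⟪v x, (r⁻¹ : 𝕜) • s.indicator f (x / r)⟫_𝕜 :=
        setIntegral_inner_comp_mul_left hs hr hrs v f
    _ = ∫ x in s, ⟪v x, hmem.toLp _ x⟫_𝕜 := integral_congr_ae <| by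
        filter_upwards [hmem.coeFn_toLp] with x hx
        rw [hx]

theorem coeFn_adjoint_dilation_of_ae_eq (hs : MeasurableSet s) (hr : 0 < r)
    (hrs : Set.MapsTo (r * ·) s s) {f : Lp E 2 (volume.restrict s)} {g : ℝ → E}
    (hfg : f =ᵐ[volume.restrict s] g) (hg : ∀ x ∈ s, x / r ∉ s → g (x / r) = 0) :
    ((dilation 𝕜 E 2 hs hr hrs)†) f =ᵐ[volume.restrict s] fun x => (r⁻¹ : 𝕜) • g (x / r) := by
  have hfg' : ∀ᵐ x, s.indicator f (x / r) = s.indicator g (x / r) :=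
    (quasiMeasurePreserving_of_map_le_smul (measurable_id.div_const r)
      (map_volume_div hr.ne').le).ae_eq_comp ((ae_eq_restrict_iff_indicator_ae_eq hs).1 hfg)
  filter_upwards [coeFn_adjoint_dilation (𝕜 := 𝕜) hs hr hrs f, ae_restrict_of_ae hfg',
    ae_restrict_mem hs] with x hadj hind hx
  by_cases hxr : x / r ∈ s
  · rw [hadj, hind, Set.indicator_of_mem hxr]
  · rw [hadj, hind, Set.indicator_of_notMem hxr, hg x hx hxr]

end Dilation

section EdgeOperator

variable {𝕜 E : Type*} [RCLike 𝕜] [NormedAddCommGroup E] [InnerProductSpace 𝕜 E]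

theorem mapsTo_half_mul_Ioo : Set.MapsTo ((1 / 2 : ℝ) * ·) (Set.Ioo 0 1) (Set.Ioo 0 1) := by
  rintro x ⟨hx₀, hx₁⟩
  constructor <;> linarith

variable (𝕜 E) in
/-- The dilation `f ↦ f (· / 2)` on a single edge. -/
noncomputable def halfDilation : Lp E 2 edgeMeasure →L[𝕜] Lp E 2 edgeMeasure :=
  dilation 𝕜 E 2 measurableSet_Ioo one_half_pos mapsTo_half_mul_Ioo

theorem coeFn_halfDilation_of_ae_eq {f : Lp E 2 edgeMeasure} {g : ℝ → E}
    (hfg : f =ᵐ[edgeMeasure] g) :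
    halfDilation 𝕜 E f =ᵐ[edgeMeasure] fun x => g (x / 2) := by
  filter_upwards [coeFn_dilation_of_ae_eq (𝕜 := 𝕜) measurableSet_Ioo one_half_pos
    mapsTo_half_mul_Ioo hfg] with x hx
  rw [halfDilation, hx, one_div_mul_eq_div]

variable [CompleteSpace E]

theorem coeFn_adjoint_halfDilation_of_ae_eq {f : Lp E 2 edgeMeasure} {g : ℝ → E}
    (hfg : f =ᵐ[edgeMeasure] g) (hg : ∀ x, 1 ≤ x → g x = 0) :
    ((halfDilation 𝕜 E)†) f =ᵐ[edgeMeasure] fun x => (2 : 𝕜) • g (2 * x) := by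
  have hg' (x : ℝ) (hx : x ∈ Set.Ioo 0 1) (hx2 : x / (1 / 2) ∉ Set.Ioo (0 : ℝ) 1) :
      g (x / (1 / 2)) = 0 :=
    hg _ (not_lt.1 fun h => hx2 ⟨div_pos hx.1 one_half_pos, h⟩)
  filter_upwards [coeFn_adjoint_dilation_of_ae_eq (𝕜 := 𝕜) measurableSet_Ioo one_half_pos
    mapsTo_half_mul_Ioo hfg hg'] with x hx
  have htwo : (((1 / 2 : ℝ) : 𝕜))⁻¹ = 2 := by
    rw [one_div, RCLike.ofReal_inv, inv_inv, RCLike.ofReal_ofNat]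
  rw [halfDilation, hx, htwo, div_div_eq_mul_div, div_one, mul_comm]

variable {ψ : ℝ → 𝕜}

variable (E) in
/-- The dilation-with-cutoff operator `Y = (3 - 2 D*) ψ` on an edge, where `D f = f (· / 2)`; thus
`Y f x = 3 (ψ f) x - 4 (ψ f) (2 x)` if the cutoff `ψ` vanishes on `[1, ∞)`. -/
noncomputable def cutoffDilation (hψ : MemLp ψ ∞ edgeMeasure) :
    Lp E 2 edgeMeasure →L[𝕜] Lp E 2 edgeMeasure :=
  ((3 : 𝕜) • 1 - (2 : 𝕜) • (halfDilation 𝕜 E)†) ∘L lpMul 2 hψ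

theorem adjoint_cutoffDilation (hψ : MemLp ψ ∞ edgeMeasure) :
    (cutoffDilation E hψ)† = lpMul 2 hψ.star ∘L ((3 : 𝕜) • 1 - (2 : 𝕜) • halfDilation 𝕜 E) := by
  rw [cutoffDilation, ContinuousLinearMap.adjoint_comp, adjoint_lpMul, map_sub, map_smulₛₗ,
    map_smulₛₗ, ContinuousLinearMap.adjoint_adjoint, ContinuousLinearMap.adjoint_one,
    map_ofNat, map_ofNat]

theorem coeFn_cutoffDilation_of_ae_eq (hψ : MemLp ψ ∞ edgeMeasure) (hψ₁ : ∀ x, 1 ≤ x → ψ x = 0)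
    {f : Lp E 2 edgeMeasure} {g : ℝ → E} (hfg : f =ᵐ[edgeMeasure] g) :
    cutoffDilation E hψ f =ᵐ[edgeMeasure]
      fun x => (3 : 𝕜) • ψ x • g x - (4 : 𝕜) • ψ (2 * x) • g (2 * x) := by
  have hmul : lpMul 2 hψ f =ᵐ[edgeMeasure] fun x => ψ x • g x := by
    filter_upwards [coeFn_lpMul hψ f, hfg] with x hx hgx
    rw [hx, hgx]
  have hadj := coeFn_adjoint_halfDilation_of_ae_eq (𝕜 := 𝕜) hmul fun x hx => by
    rw [hψ₁ x hx, zero_smul]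
  have hY : cutoffDilation E hψ f =
      (3 : 𝕜) • lpMul 2 hψ f - (2 : 𝕜) • ((halfDilation 𝕜 E)†) (lpMul 2 hψ f) := rfl
  rw [hY]
  filter_upwards [Lp.coeFn_sub ((3 : 𝕜) • lpMul 2 hψ f) _, Lp.coeFn_smul (3 : 𝕜) (lpMul 2 hψ f),
    Lp.coeFn_smul (2 : 𝕜) (((halfDilation 𝕜 E)†) (lpMul 2 hψ f)), hmul, hadj]
    with x hsub hthree htwo hx hx'
  rw [hsub, Pi.sub_apply, hthree, htwo, Pi.smul_apply, Pi.smul_apply, hx, hx', smul_smul 2 2]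
  norm_num

theorem coeFn_adjoint_cutoffDilation_of_ae_eq (hψ : MemLp ψ ∞ edgeMeasure)
    {f : Lp E 2 edgeMeasure} {g : ℝ → E} (hfg : f =ᵐ[edgeMeasure] g) :
    ((cutoffDilation E hψ)†) f =ᵐ[edgeMeasure]
      fun x => star (ψ x) • ((3 : 𝕜) • g x - (2 : 𝕜) • g (x / 2)) := by
  have hY : ((cutoffDilation E hψ)†) f =
      lpMul 2 hψ.star ((3 : 𝕜) • f - (2 : 𝕜) • halfDilation 𝕜 E f) := by
    rw [adjoint_cutoffDilation]
    rfl
  rw [hY]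
  filter_upwards [coeFn_lpMul hψ.star ((3 : 𝕜) • f - (2 : 𝕜) • halfDilation 𝕜 E f),
    Lp.coeFn_sub ((3 : 𝕜) • f) ((2 : 𝕜) • halfDilation 𝕜 E f), Lp.coeFn_smul (3 : 𝕜) f,
    Lp.coeFn_smul (2 : 𝕜) (halfDilation 𝕜 E f), hfg, coeFn_halfDilation_of_ae_eq (𝕜 := 𝕜) hfg]
    with x hmul hsub hthree htwo hx hx'
  rw [hmul, hsub, Pi.sub_apply, hthree, htwo, Pi.smul_apply, Pi.smul_apply, hx, hx', Pi.star_apply]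

variable (E) in
/-- The operator `1 + Y*Y` on a single edge. -/
noncomputable def edgeOperator (hψ : MemLp ψ ∞ edgeMeasure) :
    Lp E 2 edgeMeasure ≃L[𝕜] Lp E 2 edgeMeasure :=
  oneAddAdjointCompSelf (cutoffDilation E hψ)

theorem coeFn_edgeOperator (hψ : MemLp ψ ∞ edgeMeasure) {f : Lp E 2 edgeMeasure} {g w : ℝ → E}
    (hfg : f =ᵐ[edgeMeasure] g) (hfw : cutoffDilation E hψ f =ᵐ[edgeMeasure] w) :
    edgeOperator E hψ f =ᵐ[edgeMeasure]
      fun x => g x + star (ψ x) • ((3 : 𝕜) • w x - (2 : 𝕜) • w (x / 2)) := by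
  rw [edgeOperator, oneAddAdjointCompSelf_apply]
  filter_upwards [Lp.coeFn_add f (((cutoffDilation E hψ)†) (cutoffDilation E hψ f)), hfg,
    coeFn_adjoint_cutoffDilation_of_ae_eq hψ hfw] with x hadd hx hadj
  rw [hadd, Pi.add_apply, hx, hadj]

theorem edgeOperator_ae_eq_self {c : ℝ} (hc : 0 ≤ c) (hψ : MemLp ψ ∞ edgeMeasure)
    (hψc : ∀ x, c ≤ x → ψ x = 0) (f : Lp E 2 edgeMeasure) :
    edgeOperator E hψ f =ᵐ[volume.restrict (Set.Ioo c 1)] f := by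
  have hX := coeFn_edgeOperator hψ (ae_eq_refl f) (ae_eq_refl (cutoffDilation E hψ f))
  filter_upwards [ae_restrict_of_ae_restrict_of_subset (Set.Ioo_subset_Ioo_left hc) hX,
    ae_restrict_mem measurableSet_Ioo] with x hX hx
  rw [hX, hψc x hx.1.le, star_zero, zero_smul, add_zero]

theorem exists_continuous_edgeOperator_ae_eq (hψ : MemLp ψ ∞ edgeMeasure) (hψ_cont : Continuous ψ)
    (hψ₀ : ψ 0 = 1) (hψ₁ : ∀ x, 1 ≤ x → ψ x = 0) {f : Lp E 2 edgeMeasure} {g : ℝ → E}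
    (hg : Continuous g) (hfg : f =ᵐ[edgeMeasure] g) :
    ∃ h : ℝ → E, Continuous h ∧ h 0 = 0 ∧ edgeOperator E hψ f =ᵐ[edgeMeasure] h := by
  refine ⟨_, ?_, ?_, coeFn_edgeOperator hψ hfg (coeFn_cutoffDilation_of_ae_eq hψ hψ₁ hfg)⟩
  · fun_prop
  · simp only [mul_zero, zero_div, hψ₀, star_one, one_smul]
    module

end EdgeOperator

theorem exists_continuous_eqOn_Icc {α X : Type*} [LinearOrder α] [TopologicalSpace α]
    [OrderTopology α] [TopologicalSpace X] {a b : α} (hab : a ≤ b) {g : α → X}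
    (hg : ContinuousOn g (Set.Icc a b)) :
    ∃ G : α → X, Continuous G ∧ Set.EqOn g G (Set.Icc a b) := by
  refine ⟨Set.IccExtend hab ((Set.Icc a b).domRestrict g), hg.domRestrict.Icc_extend', ?_⟩
  intro x hx
  rw [Set.IccExtend_of_mem _ _ hx, Set.domRestrict_apply]

theorem exists_continuous_cutoff (𝕜 : Type*) [RCLike 𝕜] {c : ℝ} (hc : 0 < c) (μ : Measure ℝ) :
    ∃ ψ : ℝ → 𝕜, Continuous ψ ∧ MemLp ψ ∞ μ ∧ ψ 0 = 1 ∧ ∀ x, c ≤ x → ψ x = 0 := by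
  obtain ⟨φ, hφ_zero, hφ_one, hφ_mem⟩ := exists_continuous_zero_one_of_isClosed
    (isClosed_Ici (a := c)) (isClosed_singleton (x := (0 : ℝ))) (by simpa using hc)
  have hψ : Continuous fun x => (φ x : 𝕜) := RCLike.continuous_ofReal.comp φ.continuous
  refine ⟨fun x => (φ x : 𝕜), hψ, ?_, ?_, fun x hx => ?_⟩
  · refine memLp_top_of_bound hψ.aestronglyMeasurable 1 (.of_forall fun x => ?_)
    rw [RCLike.norm_of_nonneg (hφ_mem x).1]
    exact (hφ_mem x).2
  · simp [hφ_one (Set.mem_singleton 0)]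
  · simp [hφ_zero hx]

theorem stmt_18_general {𝕜 E ι : Type*} [RCLike 𝕜] [NormedAddCommGroup E] [InnerProductSpace 𝕜 E]
    [CompleteSpace E] [Fintype ι] {δ : ℝ} (hδ : δ ∈ Set.Ico (0 : ℝ) 1) :
    ∃ X : PiLp 2 (fun _ : ι => Lp E 2 edgeMeasure) ≃L[𝕜] PiLp 2 (fun _ : ι => Lp E 2 edgeMeasure),
      (∀ f, ‖f‖ ^ 2 ≤ RCLike.re ⟪X f, f⟫_𝕜 ∧ RCLike.im ⟪X f, f⟫_𝕜 = 0) ∧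
      (∀ f j, X f j =ᵐ[volume.restrict (Set.Ioo (1 - δ) 1)] f j) ∧
      (∀ f j,
        (∃ g : ℝ → E, ContinuousOn g (Set.Icc 0 1) ∧ f j =ᵐ[edgeMeasure] g) →
        (∃ h : ℝ → E, ContinuousOn h (Set.Icc 0 1) ∧ h 0 = 0 ∧ X f j =ᵐ[edgeMeasure] h)) := by
  obtain ⟨ψ, hψ_cont, hψ, hψ₀, hψδ⟩ := exists_continuous_cutoff 𝕜 (sub_pos.2 hδ.2) edgeMeasure
  have hψ₁ (x : ℝ) (hx : 1 ≤ x) : ψ x = 0 := hψδ x (by linarith [hδ.1])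
  refine ⟨piLpCongrRight 2 fun _ => edgeOperator E hψ,
    norm_sq_le_re_inner_piLpCongrRight _ fun _ =>
      norm_sq_le_re_inner_oneAddAdjointCompSelf (cutoffDilation E hψ),
    fun f j => edgeOperator_ae_eq_self (sub_nonneg.2 hδ.2.le) hψ hψδ (f j), ?_⟩
  rintro f j ⟨g, hg, hfg⟩
  obtain ⟨G, hG, hgG⟩ := exists_continuous_eqOn_Icc zero_le_one hg
  have hgG' : g =ᵐ[edgeMeasure] G :=
    (ae_restrict_mem measurableSet_Ioo).mono fun x hx => hgG (Set.Ioo_subset_Icc_self hx)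
  obtain ⟨h, hh, hh₀, hXh⟩ :=
    exists_continuous_edgeOperator_ae_eq hψ hψ_cont hψ₀ hψ₁ hG (hfg.trans hgG')
  exact ⟨h, hh.continuousOn, hh₀, hXh⟩

/-- For every `δ ∈ (0, 1/2)` there is a bounded, boundedly invertible operator `X` on
`H = ⊕ⱼ L²((0,1))` with `⟨Xf, f⟩ ≥ ‖f‖²` (in particular `X` is positive) such that
`(Xf)ⱼ = fⱼ` a.e. on `(1−δ, 1)` for every `j`, and such that whenever `fⱼ` agrees a.e.
with a continuous function on `[0,1]`, `(Xf)ⱼ` agrees a.e. with a continuous function on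
`[0,1]` vanishing at `0`. -/
theorem stmt_18 (n : ℕ) (hn : 0 < n) (δ : ℝ) (hδ : δ ∈ Set.Ioo (0:ℝ) (1/2)) :
    ∃ X : GraphL2 n ≃L[ℂ] GraphL2 n,
      (∀ f : GraphL2 n,
        ‖f‖ ^ 2 ≤ (inner ℂ (X f) f : ℂ).re ∧ (inner ℂ (X f) f : ℂ).im = 0) ∧
      (∀ f : GraphL2 n, ∀ j : Fin n,
        ∀ᵐ x ∂(volume.restrict (Set.Ioo (1 - δ) 1)), (X f j : ℝ → ℂ) x = (f j : ℝ → ℂ) x) ∧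
      (∀ f : GraphL2 n, ∀ j : Fin n,
        (∃ g : ℝ → ℂ, ContinuousOn g (Set.Icc 0 1) ∧ (f j : ℝ → ℂ) =ᵐ[edgeMeasure] g) →
        (∃ h : ℝ → ℂ, ContinuousOn h (Set.Icc 0 1) ∧ h 0 = 0 ∧
          (X f j : ℝ → ℂ) =ᵐ[edgeMeasure] h)) := by
  exact stmt_18_general ⟨hδ.1.le, hδ.2.trans one_half_lt_one⟩
end
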